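/- Let $p$ be a prime, $q$ a power of $p$, and $M\ge 2$ an integer. Write $\bar a=a^q$ for $a\in\mathbb F_{q^2}$, and let $f\mapsto\bar f$ be the coefficientwise extension to polynomials over $\mathbb F_{q^2}$. For $f\in\mathbb F_{q^2}[t]$ of degree $d$ with $f(0)\ne 0$ put $\tilde f(t)=\overline{f(0)}^{\,-1}\,t^{d}\,\bar f(t^{-1})$. A monic irreducible $f$ with $f(0)\neq 0$ and $\tilde f=f$ is called SCIM. Let $\widetilde N_M(q,d)$ be the number of SCIM polynomials $f$ of degree $d$ over $\mathbb F_{q^2}$ such that $f(x^M)$ has a SCIM factor of degree $d$. Let $\widetilde R_M(q,d)$ be the number of unordered pairs $\{g,\tilde g\}$, where $g$ is a monic irreducible polynomial of degree $d$ over $\mathbb F_{q^2}$ with $g(0)\ne 0$ and $g\neq\tilde g$ such that $g(x^M)$ has an irreducible factor of degree $d$ over $\mathbb F_{q^2}$. For $n\ge 1$ let $$\mathrm U(n,q^2)=\{A\in \mathrm{GL}(n,\mathbb F_{q^2}) : A\Lambda_n\bar A^{t}=\Lambda_n\},$$ where $\Lambda_n$ is the $n\times n$ anti-diagonal matrix with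 all anti-diagonal entries $1$, and let $cS_U^M(n,q)$ be the number of conjugacy classes of $\mathrm U(n,q^2)$ whose elements are separable (that is, have squarefree characteristic polynomial over $\mathbb F_{q^2}$) and are $M$-th powers of elements of $\mathrm U(n,q^2)$. Then, in the formal power series ring $\mathbb Q[[z]]$ (in which both infinite products converge), $$1+\sum_{n\ge1}cS_U^M(n,q)\,z^n=\prod_{d\ge 1,\ d\text{ odd}}(1+z^d)^{\widetilde N_M(q,d)}\ \prod_{d\ge1}(1+z^{2d})^{\widetilde R_M(q,d)}.$$ -/

import Mathlib

open Polynomial Matrix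

noncomputable section

/-- `f̃(t) = conj(f(0))⁻¹ · t^(deg f) · f̄(1/t)`, where the conjugation `σ` is applied
coefficientwise. It is only meant for polynomials with `f(0) ≠ 0`. -/
def tildePoly {F : Type*} [Field F] (σ : F →+* F) (f : F[X]) : F[X] :=
  Polynomial.C (σ (f.coeff 0))⁻¹ * (f.map σ).reverse

/-- A self-conjugate irreducible monic (SCIM) polynomial with nonzero constant term. -/
def IsSCIM {F : Type*} [Field F] (σ : F →+* F) (f : F[X]) : Prop :=
  f.Monic ∧ Irreducible f ∧ f.coeff 0 ≠ 0 ∧ tildePoly σ f = f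

/-- An `M̃`-power polynomial: a SCIM polynomial `f` such that `f(x^M)` has a SCIM factor of
degree `deg f`. -/
def IsMtildePowerPoly {F : Type*} [Field F] (σ : F →+* F) (M : ℕ) (f : F[X]) : Prop :=
  IsSCIM σ f ∧ ∃ g : F[X], IsSCIM σ g ∧ g.natDegree = f.natDegree ∧ g ∣ f.comp (X ^ M)

/-- `Ñ_M(q,d)`: the number of `M̃`-power SCIM polynomials of degree `d`. -/
def NtildeM {F : Type*} [Field F] (σ : F →+* F) (M d : ℕ) : ℕ :=
  Nat.card {f : F[X] // IsMtildePowerPoly σ M f ∧ f.natDegree = d}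

/-- An `M`-power polynomial: a monic irreducible `g` such that `g(x^M)` has an irreducible
factor of degree `deg g`. -/
def IsMPowerPoly {F : Type*} [Field F] (M : ℕ) (g : F[X]) : Prop :=
  g.Monic ∧ Irreducible g ∧
    ∃ h : F[X], Irreducible h ∧ h.natDegree = g.natDegree ∧ h ∣ g.comp (X ^ M)

/-- `R̃_M(q,d)`: the number of unordered pairs `{g, g̃}` with `g` a monic irreducible
degree-`d` `M`-power polynomial with `g(0) ≠ 0` (so that `g̃` is defined) and `g ≠ g̃`. -/
def RtildeM {F : Type*} [Field F] (σ : F →+* F) (M d : ℕ) : ℕ :=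
  Nat.card {P : Sym2 F[X] // ∃ g : F[X], IsMPowerPoly M g ∧ g.coeff 0 ≠ 0 ∧
    g.natDegree = d ∧ g ≠ tildePoly σ g ∧ P = s(g, tildePoly σ g)}

/-- The anti-diagonal matrix `Λ_n` with all anti-diagonal entries `1`. -/
def antidiagMat (F : Type*) [Field F] (n : ℕ) : Matrix (Fin n) (Fin n) F :=
  Matrix.of fun i j => if (i : ℕ) + (j : ℕ) + 1 = n then 1 else 0

/-- The unitary group `U(n,q²) = {A ∈ GL(n, F) : A · Λ_n · Āᵗ = Λ_n}`, where `Ā` applies `σ`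
entrywise. -/
def unitaryGrp {F : Type*} [Field F] (σ : F →+* F) (n : ℕ) : Subgroup (GL (Fin n) F) where
  carrier := {A | (A : Matrix (Fin n) (Fin n) F) * antidiagMat F n *
    ((A : Matrix (Fin n) (Fin n) F).map σ)ᵀ = antidiagMat F n}
  one_mem' := by simp
  mul_mem' := by
    intro A B hA hB
    simp only [Set.mem_ofPred_eq] at hA hB ⊢
    calc ((A * B : GL (Fin n) F) : Matrix (Fin n) (Fin n) F) * antidiagMat F n *
          (((A * B : GL (Fin n) F) : Matrix (Fin n) (Fin n) F).map σ)ᵀ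
        = A * (B * antidiagMat F n * ((B : Matrix (Fin n) (Fin n) F).map σ)ᵀ) *
          ((A : Matrix (Fin n) (Fin n) F).map σ)ᵀ := by
          simp only [Units.val_mul, Matrix.map_mul, Matrix.transpose_mul, Matrix.mul_assoc]
      _ = antidiagMat F n := by rw [hB, hA]
  inv_mem' := by
    intro A hA
    simp only [Set.mem_ofPred_eq] at hA ⊢
    have h1 : ((A⁻¹ : GL (Fin n) F) : Matrix (Fin n) (Fin n) F) * A = 1 := by
      rw [← Units.val_mul]; simp
    have h2 : ((A : Matrix (Fin n) (Fin n) F).map σ)ᵀ *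
        (((A⁻¹ : GL (Fin n) F) : Matrix (Fin n) (Fin n) F).map σ)ᵀ = 1 := by
      rw [← Matrix.transpose_mul, ← Matrix.map_mul, h1]; simp
    calc ((A⁻¹ : GL (Fin n) F) : Matrix (Fin n) (Fin n) F) * antidiagMat F n *
          (((A⁻¹ : GL (Fin n) F) : Matrix (Fin n) (Fin n) F).map σ)ᵀ
        = ((A⁻¹ : GL (Fin n) F) : Matrix (Fin n) (Fin n) F) *
            (A * antidiagMat F n * ((A : Matrix (Fin n) (Fin n) F).map σ)ᵀ) *
            (((A⁻¹ : GL (Fin n) F) : Matrix (Fin n) (Fin n) F).map σ)ᵀ := by rw [hA]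
      _ = (((A⁻¹ : GL (Fin n) F) : Matrix (Fin n) (Fin n) F) * A) * antidiagMat F n *
            (((A : Matrix (Fin n) (Fin n) F).map σ)ᵀ *
            (((A⁻¹ : GL (Fin n) F) : Matrix (Fin n) (Fin n) F).map σ)ᵀ) := by
          simp only [Matrix.mul_assoc]
      _ = antidiagMat F n := by rw [h1, h2, Matrix.one_mul, Matrix.mul_one]

/-- A matrix is separable if its characteristic polynomial is squarefree. -/
def IsSeparableMat {F : Type*} [Field F] {n : ℕ} (A : Matrix (Fin n) (Fin n) F) : Prop :=
  Squarefree A.charpoly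

/-- `cS_U^M(n,q)`: the number of conjugacy classes of `U(n,q²)` that consist of separable
matrices which are `M`-th powers in `U(n,q²)`. -/
def numSepPowerClasses {F : Type*} [Field F] (σ : F →+* F) (M n : ℕ) : ℕ :=
  Nat.card {c : ConjClasses (unitaryGrp σ n) // ∀ A ∈ c.carrier,
    IsSeparableMat ((A : GL (Fin n) F) : Matrix (Fin n) (Fin n) F) ∧
      ∃ B : unitaryGrp σ n, B ^ M = A}

/-- The usual topology of the formal power series ring `ℚ[[z]]`: coefficientwise convergence,
each copy of `ℚ` being discrete. -/
instance formalTopology : TopologicalSpace (PowerSeries ℚ) :=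
  @PowerSeries.WithPiTopology.instTopologicalSpace ℚ ⊥

end

section Orbits

open Function

variable {α : Type*}

open Classical in
/-- The orbit of a periodic point, as a finset. -/
noncomputable def orbitFinset (f : α → α) (x : α) : Finset α :=
  (Finset.range (minimalPeriod f x)).image fun i => f^[i] x

theorem mem_orbitFinset {f : α → α} {x y : α} (hx : x ∈ periodicPts f) :
    y ∈ orbitFinset f x ↔ ∃ k, f^[k] x = y := by
  classical
  simp only [orbitFinset, Finset.mem_image, Finset.mem_range]
  constructor
  · rintro ⟨k, -, h⟩
    exact ⟨k, h⟩
  · rintro ⟨k, h⟩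
    exact ⟨k % minimalPeriod f x, Nat.mod_lt _ (minimalPeriod_pos_of_mem_periodicPts hx),
      by rw [iterate_mod_minimalPeriod_eq, h]⟩

theorem self_mem_orbitFinset {f : α → α} {x : α} (hx : x ∈ periodicPts f) :
    x ∈ orbitFinset f x :=
  (mem_orbitFinset hx).2 ⟨0, rfl⟩

theorem card_orbitFinset (f : α → α) (x : α) :
    (orbitFinset f x).card = minimalPeriod f x := by
  classical
  rw [orbitFinset, Finset.card_image_of_injOn, Finset.card_range]
  intro a ha b hb h
  exact iterate_injOn_Iio_minimalPeriod (by simpa using ha) (by simpa using hb) h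

theorem exists_iterate_comm {f : α → α} {x y : α} (hx : x ∈ periodicPts f) {k : ℕ}
    (h : f^[k] x = y) : ∃ j, f^[j] y = x := by
  have hpos := minimalPeriod_pos_of_mem_periodicPts hx
  refine ⟨k * (minimalPeriod f x - 1), ?_⟩
  rw [← h, ← iterate_add_apply]
  have : k * (minimalPeriod f x - 1) + k = minimalPeriod f x * k := by
    obtain ⟨m, hm⟩ : ∃ m, minimalPeriod f x = m + 1 := ⟨_, (Nat.sub_add_cancel hpos).symm⟩
    rw [hm]; simp; ring
  rw [this]
  exact (isPeriodicPt_minimalPeriod f x).mul_const k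

theorem orbitFinset_iterate {f : α → α} (hf : ∀ x, x ∈ periodicPts f) (x : α) (k : ℕ) :
    orbitFinset f (f^[k] x) = orbitFinset f x := by
  ext y
  rw [mem_orbitFinset (hf _), mem_orbitFinset (hf _)]
  constructor
  · rintro ⟨j, hj⟩
    exact ⟨j + k, by rw [iterate_add_apply, hj]⟩
  · rintro ⟨j, hj⟩
    obtain ⟨i, hi⟩ := exists_iterate_comm (hf x) (k := k) rfl
    exact ⟨j + i, by rw [iterate_add_apply, hi, hj]⟩

theorem orbitFinset_apply {f : α → α} (hf : ∀ x, x ∈ periodicPts f) (x : α) :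
    orbitFinset f (f x) = orbitFinset f x :=
  orbitFinset_iterate hf x 1

theorem orbitFinset_eq_iff {f : α → α} (hf : ∀ x, x ∈ periodicPts f) {x y : α} :
    orbitFinset f x = orbitFinset f y ↔ ∃ k, f^[k] x = y := by
  constructor
  · intro h
    rw [← mem_orbitFinset (hf x), h]
    exact self_mem_orbitFinset (hf y)
  · rintro ⟨k, rfl⟩
    exact (orbitFinset_iterate hf x k).symm

/-- An equivariant section of `π` exists over a stable set as soon as every point of the set has
a lift of the same period. -/
theorem exists_equivariant_section {β : Type*} [Nonempty β] {f : α → α}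
    (hf : ∀ x, x ∈ periodicPts f) {T : β → β} {π : β → α} (hπ : Semiconj π T f) (s : Set α)
    (hs : ∀ x ∈ s, f x ∈ s) (h : ∀ x ∈ s, ∃ y, π y = x ∧ T^[minimalPeriod f x] y = y) :
    ∃ b : α → β, ∀ x ∈ s, π (b x) = x ∧ b (f x) = T (b x) := by
  classical
  have hne : ∀ x, (orbitFinset f x).Nonempty := fun x => ⟨x, self_mem_orbitFinset (hf x)⟩
  have hit : ∀ x ∈ s, ∀ k, f^[k] x ∈ s := by
    intro x hx k
    induction k with
    | zero => exact hx
    | succ k ih => rw [iterate_succ_apply']; exact hs _ ih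
  let pick : Finset α → α := fun t => if ht : t.Nonempty then ht.choose else
    π (Classical.arbitrary β)
  have hpick : ∀ x, pick (orbitFinset f x) ∈ orbitFinset f x := by
    intro x
    simp only [pick, dif_pos (hne x)]
    exact (hne x).choose_spec
  let rep : α → α := fun x => pick (orbitFinset f x)
  have hrep : ∀ x, rep (f x) = rep x := fun x => by simp only [rep, orbitFinset_apply hf]
  have hk : ∀ x, ∃ k, f^[k] (rep x) = x := by
    intro x
    obtain ⟨k, hk⟩ := (mem_orbitFinset (hf x)).1 (hpick x)
    exact exists_iterate_comm (hf x) hk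
  choose k hk using hk
  have hrs : ∀ x ∈ s, rep x ∈ s := by
    intro x hx
    obtain ⟨j, hj⟩ := (mem_orbitFinset (hf x)).1 (hpick x)
    change pick _ ∈ s
    rw [← hj]
    exact hit x hx j
  have hy : ∀ x, ∃ y, x ∈ s → π y = x ∧ T^[minimalPeriod f x] y = y := by
    intro x
    by_cases hx : x ∈ s
    · obtain ⟨y, hy⟩ := h x hx
      exact ⟨y, fun _ => hy⟩
    · exact ⟨Classical.arbitrary _, fun h => absurd h hx⟩
  choose y hy using hy
  refine ⟨fun x => T^[k x] (y (rep x)), fun x hx => ⟨?_, ?_⟩⟩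
  · rw [(hπ.iterate_right (k x)).eq, (hy _ (hrs x hx)).1, hk]
  · have hT : IsPeriodicPt T (minimalPeriod f (rep x)) (y (rep x)) := (hy _ (hrs x hx)).2
    have hmod : k (f x) % minimalPeriod f (rep x) = (k x + 1) % minimalPeriod f (rep x) := by
      have hpos := minimalPeriod_pos_of_mem_periodicPts (hf (rep x))
      apply iterate_injOn_Iio_minimalPeriod (Nat.mod_lt _ hpos) (Nat.mod_lt _ hpos)
      simp only [iterate_mod_minimalPeriod_eq]
      rw [iterate_succ_apply', hk x]
      conv_lhs => rw [← hrep x]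
      exact hk (f x)
    change T^[k (f x)] (y (rep (f x))) = T (T^[k x] (y (rep x)))
    rw [hrep, ← iterate_succ_apply' T, ← hT.iterate_mod_apply, hmod, hT.iterate_mod_apply]

end Orbits

section TwistedFrobenius

open Function

variable {F K : Type*} [Field F] [Field K] [Algebra F K]

/-- The compatibilities between the conjugation `σ : a ↦ a ^ q` of a quadratic extension of finite
fields and the Frobenius map `τ : x ↦ x ^ q` of an algebraic extension of it. -/
structure IsFrobeniusExtension (σ : F →+* F) (τ : K →+* K) (q : ℕ) : Prop where
  two_le : 2 ≤ q
  tau_apply : ∀ x, τ x = x ^ q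
  sigma_apply : ∀ a, σ a = a ^ q
  sigma_sigma : ∀ a, σ (σ a) = a
  exists_sigma_ne : ∃ a, σ a ≠ a
  descent : ∀ x : K, τ (τ x) = x → ∃ a, algebraMap F K a = x
  periodic : ∀ x : K, ∃ k, 0 < k ∧ τ^[k] x = x

/-- The twisted Frobenius map `x ↦ (x ^ q)⁻¹`, whose square is the Frobenius of `F`. -/
def twist (τ : K →+* K) (x : K) : K := (τ x)⁻¹

theorem twist_twist (τ : K →+* K) (x : K) : twist τ (twist τ x) = τ (τ x) := by
  simp [twist]

theorem twist_injective (τ : K →+* K) : Injective (twist τ) :=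
  fun _ _ h => τ.injective (inv_injective h)

theorem twist_pow (τ : K →+* K) (x : K) (m : ℕ) : twist τ (x ^ m) = twist τ x ^ m := by
  simp [twist]

theorem twist_ne_zero (τ : K →+* K) {x : K} (hx : x ≠ 0) : twist τ x ≠ 0 := by
  simpa [twist] using hx

theorem twist_iterate_pow (τ : K →+* K) (x : K) (m k : ℕ) :
    (twist τ)^[k] (x ^ m) = (twist τ)^[k] x ^ m := by
  induction k with
  | zero => rfl
  | succ k ih => rw [iterate_succ_apply', iterate_succ_apply', ih, twist_pow]

theorem twist_iterate_two (τ : K →+* K) : (twist τ)^[2] = τ^[2] :=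
  funext fun x => twist_twist τ x

theorem twist_iterate_two_mul (τ : K →+* K) (k : ℕ) : (twist τ)^[2 * k] = τ^[2 * k] := by
  rw [iterate_mul, iterate_mul, twist_iterate_two]

namespace IsFrobeniusExtension

variable {σ : F →+* F} {τ : K →+* K} {q : ℕ}

theorem tau_algebraMap (h : IsFrobeniusExtension σ τ q) (a : F) :
    τ (algebraMap F K a) = algebraMap F K (σ a) := by
  rw [h.tau_apply, h.sigma_apply, map_pow]

theorem tau_comp_algebraMap (h : IsFrobeniusExtension σ τ q) :
    τ.comp (algebraMap F K) = (algebraMap F K).comp σ :=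
  RingHom.ext h.tau_algebraMap

theorem mem_periodicPts_twist (h : IsFrobeniusExtension σ τ q) (x : K) :
    x ∈ periodicPts (twist τ) := by
  obtain ⟨k, hk, hx⟩ := h.periodic x
  refine mk_mem_periodicPts (n := 2 * k) (by omega) ?_
  change (twist τ)^[2 * k] x = x
  rw [twist_iterate_two_mul]
  exact IsPeriodicPt.const_mul (f := τ) hx 2

theorem minimalPeriod_twist_pos (h : IsFrobeniusExtension σ τ q) (x : K) :
    0 < minimalPeriod (twist τ) x :=
  minimalPeriod_pos_of_mem_periodicPts (h.mem_periodicPts_twist x)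

theorem aeval_map_sigma (h : IsFrobeniusExtension σ τ q) (P : F[X]) (x : K) :
    aeval (τ x) (P.map σ) = τ (aeval x P) := by
  rw [aeval_def, aeval_def, eval₂_map, hom_eval₂, h.tau_comp_algebraMap]

theorem aeval_tau_tau (h : IsFrobeniusExtension σ τ q) (P : F[X]) (x : K) :
    aeval (τ (τ x)) P = τ (τ (aeval x P)) := by
  rw [← h.aeval_map_sigma, ← h.aeval_map_sigma, Polynomial.map_map]
  have : σ.comp σ = RingHom.id F := RingHom.ext h.sigma_sigma
  rw [this, Polynomial.map_id]

theorem exists_map_eq (h : IsFrobeniusExtension σ τ q) {P : K[X]}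
    (hP : P.map (τ.comp τ) = P) : ∃ Q : F[X], Q.map (algebraMap F K) = P := by
  have : P ∈ lifts (algebraMap F K) := by
    rw [lifts_iff_coeff_lifts]
    intro n
    obtain ⟨a, ha⟩ := h.descent (P.coeff n) (by
      conv_rhs => rw [← hP]
      simp)
    exact ⟨a, ha⟩
  exact (mem_lifts _).1 this

theorem image_twist (S : Finset K) [DecidableEq K] (hS : ∀ x ∈ S, twist τ x ∈ S) :
    S.image (twist τ) = S := by
  apply Finset.eq_of_subset_of_card_le
  · intro y hy
    obtain ⟨x, hx, rfl⟩ := Finset.mem_image.1 hy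
    exact hS x hx
  · rw [Finset.card_image_of_injective _ (twist_injective τ)]

theorem exists_twist_eq {S : Finset K} (hS : ∀ x ∈ S, twist τ x ∈ S) {x : K} (hx : x ∈ S) :
    ∃ y ∈ S, twist τ y = x := by
  classical
  rw [← image_twist S hS] at hx
  exact Finset.mem_image.1 hx

theorem tau_tau_mem {S : Finset K} (hS : ∀ x ∈ S, twist τ x ∈ S) {x : K} (hx : x ∈ S) :
    τ (τ x) ∈ S := by
  rw [← twist_twist]
  exact hS _ (hS _ hx)

theorem image_tau_tau (S : Finset K) [DecidableEq K] (hS : ∀ x ∈ S, τ (τ x) ∈ S) :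
    S.image (fun x => τ (τ x)) = S := by
  apply Finset.eq_of_subset_of_card_le
  · intro y hy
    obtain ⟨x, hx, rfl⟩ := Finset.mem_image.1 hy
    exact hS x hx
  · rw [Finset.card_image_of_injective]
    exact τ.injective.comp τ.injective

/-- A Frobenius-equivariant function on a stable finite set is given by a polynomial over `F`. -/
theorem exists_aeval_eq (h : IsFrobeniusExtension σ τ q) {S : Finset K}
    (hS : ∀ x ∈ S, τ (τ x) ∈ S) (c : K → K) (hc : ∀ x ∈ S, c (τ (τ x)) = τ (τ (c x))) :
    ∃ P : F[X], ∀ x ∈ S, aeval x P = c x := by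
  classical
  have hinj : Set.InjOn (id : K → K) (S : Set K) := Function.injective_id.injOn
  set P := Lagrange.interpolate S id c with hPdef
  have hev : ∀ x ∈ S, P.eval x = c x := fun x hx => Lagrange.eval_interpolate_at_node c hinj hx
  have hdeg : P.degree < S.card := Lagrange.degree_interpolate_lt c hinj
  obtain ⟨Q, hQ⟩ := h.exists_map_eq (P := P) (by
    refine Polynomial.eq_of_degrees_lt_of_eval_finset_eq S ?_ hdeg ?_
    · rwa [degree_map]
    · intro x hx
      rw [← image_tau_tau S hS] at hx
      obtain ⟨y, hy, rfl⟩ := Finset.mem_image.1 hx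
      rw [hev _ (hS y hy), hc y hy, ← hev y hy]
      exact Polynomial.eval_map_apply (τ.comp τ) y)
  refine ⟨Q, fun x hx => ?_⟩
  rw [← hev x hx, ← hQ, eval_map_algebraMap]

/-- The polynomial with root set a Frobenius-stable finite set descends to `F`. -/
theorem exists_map_eq_prod (h : IsFrobeniusExtension σ τ q) {S : Finset K}
    (hS : ∀ x ∈ S, τ (τ x) ∈ S) :
    ∃ f : F[X], f.Monic ∧ f.map (algebraMap F K) = ∏ x ∈ S, (X - C x) := by
  classical
  obtain ⟨f, hf⟩ := h.exists_map_eq (P := ∏ x ∈ S, (X - C x)) (by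
    rw [Polynomial.map_prod]
    conv_rhs => rw [← image_tau_tau S hS]
    rw [Finset.prod_image fun a _ b _ hab => τ.injective (τ.injective hab)]
    simp)
  refine ⟨f, ?_, hf⟩
  have := monic_prod_X_sub_C (id : K → K) S
  simp only [id] at this
  rw [← hf] at this
  exact (monic_map_iff).1 this

/-- Solvability of the norm equation `e * e^* = c` for functions on a stable finite set. -/
theorem exists_norm_eq [IsAlgClosed K] (h : IsFrobeniusExtension σ τ q) {S : Finset K}
    (hS : ∀ x ∈ S, twist τ x ∈ S) (c : K → K) (hc : ∀ x ∈ S, c x ≠ 0) :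
    ∃ e : K → K, (∀ x ∈ S, e x ≠ 0) ∧ ∀ x ∈ S, e (twist τ x) * τ (e x) = c (twist τ x) := by
  classical
  let c' : K → Kˣ := fun x => if hx : c x = 0 then 1 else Units.mk0 (c x) hx
  have hc' : ∀ x ∈ S, (c' x : K) = c x := fun x hx => by simp [c', hc x hx]
  let T : K × Kˣ → K × Kˣ := fun p => (twist τ p.1, c' (twist τ p.1) * (p.2 ^ q)⁻¹)
  have hT : ∀ (m : ℕ) (x : K), ∃ d : Kˣ, ∀ y : Kˣ,
      T^[m] (x, y) = ((twist τ)^[m] x, d * y ^ ((-(q : ℤ)) ^ m)) := by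
    intro m x
    induction m with
    | zero => exact ⟨1, fun y => by simp⟩
    | succ m ih =>
      obtain ⟨d, hd⟩ := ih
      refine ⟨c' (twist τ ((twist τ)^[m] x)) * (d ^ q)⁻¹, fun y => ?_⟩
      rw [iterate_succ_apply', hd, iterate_succ_apply']
      simp only [T, Prod.mk.injEq, true_and]
      rw [mul_pow, mul_inv, mul_assoc]
      congr 2
      rw [← zpow_natCast (y ^ _), ← _root_.zpow_mul, ← _root_.zpow_neg]
      congr 1
      ring
  obtain ⟨b, hb⟩ := exists_equivariant_section (f := twist τ) (T := T) (π := Prod.fst)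
    h.mem_periodicPts_twist (fun _ => rfl) (S : Set K) hS (by
    intro x _
    obtain ⟨d, hd⟩ := hT (minimalPeriod (twist τ) x) x
    set m := minimalPeriod (twist τ) x
    have hm : 0 < m := h.minimalPeriod_twist_pos x
    have hN : ((-(q : ℤ)) ^ m - 1).natAbs ≠ 0 := by
      intro h0
      have h1 : (-(q : ℤ)) ^ m = 1 := by omega
      have h2 := congrArg Int.natAbs h1
      rw [Int.natAbs_pow, Int.natAbs_neg, Int.natAbs_natCast, Int.natAbs_one] at h2
      have := Nat.one_lt_pow hm.ne' h.two_le
      omega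
    have hroot : ∀ u : Kˣ, ∃ y : Kˣ, y ^ ((-(q : ℤ)) ^ m - 1) = u := by
      intro u
      have key : ∀ u : Kˣ, ∃ y : Kˣ, y ^ ((-(q : ℤ)) ^ m - 1).natAbs = u := by
        intro u
        obtain ⟨z, hz⟩ := IsAlgClosed.exists_pow_nat_eq (u : K) (Nat.pos_of_ne_zero hN)
        have hz0 : z ≠ 0 := by
          rintro rfl
          rw [zero_pow hN] at hz
          exact u.ne_zero hz.symm
        exact ⟨Units.mk0 z hz0, Units.ext (by simpa using hz)⟩
      rcases Int.natAbs_eq ((-(q : ℤ)) ^ m - 1) with h1 | h1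
      · obtain ⟨y, hy⟩ := key u
        exact ⟨y, by rw [h1, zpow_natCast, hy]⟩
      · obtain ⟨y, hy⟩ := key u⁻¹
        exact ⟨y, by rw [h1, _root_.zpow_neg, zpow_natCast, hy, inv_inv]⟩
    obtain ⟨y, hy⟩ := hroot d⁻¹
    refine ⟨(x, y), rfl, ?_⟩
    rw [hd, iterate_minimalPeriod]
    congr 1
    rw [_root_.zpow_sub, _root_.zpow_one, mul_inv_eq_iff_eq_mul] at hy
    rw [hy, mul_inv_cancel_left])
  refine ⟨fun x => ((b x).2 : K), fun x _ => (b x).2.ne_zero, fun x hx => ?_⟩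
  obtain ⟨h1, h2⟩ := hb x hx
  simp only [h2, T, h1]
  rw [Units.val_mul, hc' _ (hS x hx), Units.val_inv_eq_inv_val, Units.val_pow_eq_pow_val,
    h.tau_apply, inv_mul_cancel_right₀ (pow_ne_zero _ (b x).2.ne_zero)]

/-- Equivariant `M`-th roots on a stable set exist if and only if they exist pointwise, with the
same period. -/
theorem exists_equivariant_root_iff (h : IsFrobeniusExtension σ τ q) {S : Finset K}
    (hS : ∀ x ∈ S, twist τ x ∈ S) (M : ℕ) :
    (∃ b : K → K, ∀ x ∈ S, b x ^ M = x ∧ b (twist τ x) = twist τ (b x)) ↔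
      ∀ x ∈ S, ∃ y, y ^ M = x ∧ (twist τ)^[minimalPeriod (twist τ) x] y = y := by
  constructor
  · rintro ⟨b, hb⟩ x hx
    refine ⟨b x, (hb x hx).1, ?_⟩
    have : ∀ k, (twist τ)^[k] x ∈ S ∧ b ((twist τ)^[k] x) = (twist τ)^[k] (b x) := by
      intro k
      induction k with
      | zero => exact ⟨hx, rfl⟩
      | succ k ih =>
        rw [iterate_succ_apply', iterate_succ_apply', (hb _ ih.1).2, ih.2]
        exact ⟨hS _ ih.1, rfl⟩
    rw [← (this _).2, iterate_minimalPeriod]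
  · intro hy
    let Y := {p : K × K // p.2 ^ M = p.1}
    let T : Y → Y := fun p => ⟨(twist τ p.1.1, twist τ p.1.2), by
      simp only; rw [← twist_pow, p.2]⟩
    have hT : ∀ (k : ℕ) (p : Y), (T^[k] p).1 = ((twist τ)^[k] p.1.1, (twist τ)^[k] p.1.2) := by
      intro k p
      induction k with
      | zero => rfl
      | succ k ih => rw [iterate_succ_apply', iterate_succ_apply', iterate_succ_apply']; simp [T, ih]
    have : Nonempty Y := ⟨⟨(1, 1), by simp⟩⟩
    obtain ⟨b, hb⟩ := exists_equivariant_section (f := twist τ) (T := T) (π := fun p => p.1.1)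
      h.mem_periodicPts_twist (fun _ => rfl) (S : Set K) hS (by
        intro x hx
        obtain ⟨y, h1, h2⟩ := hy x hx
        refine ⟨⟨(x, y), h1⟩, rfl, Subtype.ext ?_⟩
        rw [hT]
        simp only [iterate_minimalPeriod, h2])
    refine ⟨fun x => (b x).1.2, fun x hx => ⟨?_, ?_⟩⟩
    · rw [(b x).2, (hb x hx).1]
    · simp only [(hb x hx).2, T]

end IsFrobeniusExtension

end TwistedFrobenius

section ConjTranspose

variable {F : Type*} [Field F] {n : ℕ}

/-- The conjugate transpose of a matrix with respect to a ring endomorphism. -/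
def sigmaT (σ : F →+* F) (A : Matrix (Fin n) (Fin n) F) : Matrix (Fin n) (Fin n) F := (A.map σ)ᵀ

theorem sigmaT_mul (σ : F →+* F) (A B : Matrix (Fin n) (Fin n) F) :
    sigmaT σ (A * B) = sigmaT σ B * sigmaT σ A := by
  simp [sigmaT, Matrix.map_mul]

@[simp] theorem sigmaT_one (σ : F →+* F) : sigmaT σ (1 : Matrix (Fin n) (Fin n) F) = 1 := by
  simp [sigmaT]

theorem sigmaT_add (σ : F →+* F) (A B : Matrix (Fin n) (Fin n) F) :
    sigmaT σ (A + B) = sigmaT σ A + sigmaT σ B := by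
  ext; simp [sigmaT]

theorem sigmaT_smul (σ : F →+* F) (a : F) (A : Matrix (Fin n) (Fin n) F) :
    sigmaT σ (a • A) = σ a • sigmaT σ A := by
  ext; simp [sigmaT]

theorem sigmaT_pow (σ : F →+* F) (A : Matrix (Fin n) (Fin n) F) (k : ℕ) :
    sigmaT σ (A ^ k) = sigmaT σ A ^ k := by
  induction k with
  | zero => simp
  | succ k ih => rw [pow_succ, sigmaT_mul, ih, pow_succ']

theorem sigmaT_sigmaT {σ : F →+* F} (hσ : ∀ a, σ (σ a) = a) (A : Matrix (Fin n) (Fin n) F) :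
    sigmaT σ (sigmaT σ A) = A := by
  ext; simp [sigmaT, hσ]

theorem sigmaT_aeval (σ : F →+* F) (A : Matrix (Fin n) (Fin n) F) (P : F[X]) :
    sigmaT σ (aeval A P) = aeval (sigmaT σ A) (P.map σ) := by
  induction P using Polynomial.induction_on' with
  | add p q hp hq => simp [sigmaT_add, hp, hq]
  | monomial k a =>
    rw [map_monomial, aeval_monomial, aeval_monomial, ← Algebra.smul_def, ← Algebra.smul_def,
      sigmaT_smul, sigmaT_pow]

theorem sigmaT_antidiagMat (σ : F →+* F) : sigmaT σ (antidiagMat F n) = antidiagMat F n := by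
  ext i j
  simp only [sigmaT, antidiagMat, Matrix.transpose_apply, Matrix.map_apply, Matrix.of_apply]
  rw [add_comm (j : ℕ) i]
  split_ifs <;> simp

theorem antidiagMat_mul_self : antidiagMat F n * antidiagMat F n = 1 := by
  ext i j
  rw [Matrix.mul_apply, Finset.sum_eq_single (Fin.rev i)]
  · simp only [antidiagMat, Matrix.of_apply, Fin.val_rev, Matrix.one_apply, Fin.ext_iff]
    have h1 : (i : ℕ) + (n - (i + 1)) + 1 = n := by omega
    rw [if_pos h1, one_mul]
    congr 1
    apply propext
    omega
  · intro k _ hk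
    have : (i : ℕ) + k + 1 ≠ n := fun h => hk (Fin.ext (by rw [Fin.val_rev]; omega))
    simp [antidiagMat, this]
  · simp

theorem mem_unitaryGrp {σ : F →+* F} {A : GL (Fin n) F} :
    A ∈ unitaryGrp σ n ↔
      (A : Matrix (Fin n) (Fin n) F) * antidiagMat F n * sigmaT σ A = antidiagMat F n :=
  Iff.rfl

theorem isUnit_of_mul_antidiagMat_mul {A B : Matrix (Fin n) (Fin n) F}
    (h : A * antidiagMat F n * B = antidiagMat F n) : IsUnit A := by
  refine IsUnit.of_mul_eq_one (antidiagMat F n * B * antidiagMat F n) ?_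
  rw [← Matrix.mul_assoc, ← Matrix.mul_assoc, h, antidiagMat_mul_self]

end ConjTranspose

section Eigenset

variable {F K : Type*} [Field F] [Field K] [Algebra F K] {n : ℕ}

/-- The charpoly of `A` has simple roots in `K`, and `S` is the set of these roots. -/
def IsEigenset (A : Matrix (Fin n) (Fin n) F) (S : Finset K) : Prop :=
  A.charpoly.map (algebraMap F K) = ∏ x ∈ S, (X - C x)

theorem IsEigenset.card {A : Matrix (Fin n) (Fin n) F} {S : Finset K} (hA : IsEigenset A S) :
    S.card = n := by
  have h := congrArg natDegree hA
  rw [natDegree_map, charpoly_natDegree_eq_dim, natDegree_prod_of_monic] at h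
  · simpa using h.symm
  · exact fun x _ => monic_X_sub_C x

theorem IsEigenset.unique {A : Matrix (Fin n) (Fin n) F} {S T : Finset K} (hS : IsEigenset A S)
    (hT : IsEigenset A T) : S = T := by
  classical
  have h := hS.symm.trans hT
  have h' := congrArg roots h
  rw [roots_prod_X_sub_C, roots_prod_X_sub_C] at h'
  exact Finset.val_injective h'

theorem isEigenset_iff_charpoly_eq {A B : Matrix (Fin n) (Fin n) F} {S : Finset K}
    (hA : IsEigenset A S) : IsEigenset B S ↔ B.charpoly = A.charpoly := by
  constructor
  · intro hB
    exact map_injective _ (algebraMap F K).injective (hB.trans hA.symm)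
  · intro h
    rw [IsEigenset, h]
    exact hA

theorem exists_isEigenset [PerfectField F] [IsAlgClosed K] {A : Matrix (Fin n) (Fin n) F}
    (hA : IsSeparableMat A) : ∃ S : Finset K, IsEigenset A S := by
  classical
  have hsep : (A.charpoly.map (algebraMap F K)).Separable :=
    (PerfectField.separable_iff_squarefree.2 hA).map
  refine ⟨(A.charpoly.map (algebraMap F K)).roots.toFinset, ?_⟩
  rw [IsEigenset, Finset.prod, Multiset.toFinset_val, (nodup_roots hsep).dedup]
  exact (IsAlgClosed.splits _).eq_prod_roots_of_monic ((charpoly_monic A).map _)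

theorem IsEigenset.isSeparableMat {A : Matrix (Fin n) (Fin n) F} {S : Finset K}
    (hA : IsEigenset A S) : IsSeparableMat A := by
  have h : (A.charpoly.map (algebraMap F K)).Separable := by
    rw [hA]
    exact separable_prod_X_sub_C_iff'.2 fun x _ y _ h => h
  exact ((separable_map _).1 h).squarefree

theorem IsEigenset.mem_iff {A : Matrix (Fin n) (Fin n) F} {S : Finset K} (hA : IsEigenset A S)
    {x : K} : x ∈ S ↔ (scalar (Fin n) x - A.map (algebraMap F K)).det = 0 := by
  have hev : (A.charpoly.map (algebraMap F K)).eval x =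
      (scalar (Fin n) x - A.map (algebraMap F K)).det := by
    rw [← eval_charpoly, ← charpoly_map]
  rw [← hev, hA, eval_prod, Finset.prod_eq_zero_iff]
  simp [sub_eq_zero]

theorem IsEigenset.mem_iff_mulVec {A : Matrix (Fin n) (Fin n) F} {S : Finset K}
    (hA : IsEigenset A S) {x : K} :
    x ∈ S ↔ ∃ w ≠ 0, A.map (algebraMap F K) *ᵥ w = x • w := by
  rw [hA.mem_iff, ← exists_mulVec_eq_zero_iff]
  refine exists_congr fun w => and_congr_right fun _ => ?_
  rw [sub_mulVec, sub_eq_zero, eq_comm]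
  simp [scalar_apply, Matrix.smul_mulVec, ← Matrix.smul_one_eq_diagonal]

theorem IsEigenset.mem_iff_vecMul {A : Matrix (Fin n) (Fin n) F} {S : Finset K}
    (hA : IsEigenset A S) {x : K} :
    x ∈ S ↔ ∃ w ≠ 0, w ᵥ* A.map (algebraMap F K) = x • w := by
  rw [hA.mem_iff, ← exists_vecMul_eq_zero_iff]
  refine exists_congr fun w => and_congr_right fun _ => ?_
  rw [vecMul_sub, sub_eq_zero, eq_comm]
  simp [scalar_apply, Matrix.vecMul_smul, ← Matrix.smul_one_eq_diagonal]

theorem map_aeval_mulVec {A : Matrix (Fin n) (Fin n) F} {x : K} {w : Fin n → K}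
    (hw : A.map (algebraMap F K) *ᵥ w = x • w) (P : F[X]) :
    (aeval A P).map (algebraMap F K) *ᵥ w = aeval x P • w := by
  have hpow : ∀ k, (A ^ k).map (algebraMap F K) *ᵥ w = x ^ k • w := by
    intro k
    induction k with
    | zero => simp
    | succ k ih =>
      rw [pow_succ, Matrix.map_mul, ← mulVec_mulVec, hw, mulVec_smul, ih, smul_smul, pow_succ']
  induction P using Polynomial.induction_on' with
  | add p q hp hq =>
    rw [map_add, Matrix.map_add _ (map_add _), add_mulVec, hp, hq, map_add, add_smul]
  | monomial k a =>
    rw [aeval_monomial, aeval_monomial, ← Algebra.smul_def, ← smul_smul, ← hpow k]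
    ext i
    simp [mulVec, dotProduct, Finset.mul_sum, mul_assoc]

theorem IsEigenset.charpoly_dvd_iff {A : Matrix (Fin n) (Fin n) F} {S : Finset K}
    (hA : IsEigenset A S) {P : F[X]} : A.charpoly ∣ P ↔ ∀ x ∈ S, aeval x P = 0 := by
  rw [← map_dvd_map' (algebraMap F K), hA]
  have hroot : ∀ x, X - C x ∣ P.map (algebraMap F K) ↔ aeval x P = 0 := fun x => by
    rw [dvd_iff_isRoot, IsRoot, eval_map_algebraMap]
  constructor
  · exact fun h x hx => (hroot x).1
      ((Finset.dvd_prod_of_mem (fun x : K => X - C x) hx).trans h)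
  · intro h
    refine Finset.prod_dvd_of_coprime ?_ fun x hx => (hroot x).2 (h x hx)
    exact fun x _ y _ hxy => isCoprime_X_sub_C_of_isUnit_sub (sub_ne_zero.2 hxy).isUnit

theorem IsEigenset.aeval_eq_zero_iff {A : Matrix (Fin n) (Fin n) F} {S : Finset K}
    (hA : IsEigenset A S) {P : F[X]} :
    aeval A P = 0 ↔ ∀ x ∈ S, aeval x P = 0 := by
  constructor
  · intro h x hx
    obtain ⟨w, hw0, hw⟩ := hA.mem_iff_mulVec.1 hx
    have := map_aeval_mulVec hw P
    rw [h] at this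
    simpa [hw0] using this.symm
  · intro h
    obtain ⟨Q, rfl⟩ := hA.charpoly_dvd_iff.2 h
    rw [map_mul, aeval_self_charpoly, zero_mul]

theorem IsEigenset.aeval_eq_iff {A : Matrix (Fin n) (Fin n) F} {S : Finset K}
    (hA : IsEigenset A S) {P Q : F[X]} :
    aeval A P = aeval A Q ↔ ∀ x ∈ S, aeval x P = aeval x Q := by
  have := hA.aeval_eq_zero_iff (P := P - Q)
  simpa only [map_sub, sub_eq_zero] using this

/-- The matrix with rows `v, v A, v A², …`. -/
def krylov (A : Matrix (Fin n) (Fin n) F) (v : Fin n → F) : Matrix (Fin n) (Fin n) F :=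
  Matrix.of fun i => v ᵥ* A ^ (i : ℕ)

theorem vecMul_krylov (A : Matrix (Fin n) (Fin n) F) (v c : Fin n → F) :
    c ᵥ* krylov A v = v ᵥ* aeval A (∑ i : Fin n, C (c i) * X ^ (i : ℕ)) := by
  ext j
  rw [map_sum]
  simp only [vecMul, dotProduct, krylov, Matrix.of_apply, Matrix.sum_apply, Finset.mul_sum]
  rw [Finset.sum_comm]
  refine Finset.sum_congr rfl fun i _ => Finset.sum_congr rfl fun k _ => ?_
  simp [Algebra.algebraMap_eq_smul_one]
  ring

theorem IsEigenset.exists_isUnit_krylov {A : Matrix (Fin n) (Fin n) F} {S : Finset K}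
    (hA : IsEigenset A S) : ∃ v, IsUnit (krylov A v) := by
  let φ : Module.End F (Fin n → F) := A.vecMulLinear
  have hφ : ∀ (P : F[X]) (w : Fin n → F), aeval φ P w = w ᵥ* aeval A P := by
    intro P w
    have hpow : ∀ k, (φ ^ k) w = w ᵥ* A ^ k := by
      intro k
      induction k with
      | zero => simp
      | succ k ih => rw [pow_succ', Module.End.mul_apply, ih, pow_succ, ← vecMul_vecMul]; rfl
    induction P using Polynomial.induction_on' with
    | add p q hp hq => rw [map_add, map_add, LinearMap.add_apply, hp, hq, vecMul_add]
    | monomial k a =>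
      rw [aeval_monomial, aeval_monomial, ← Algebra.smul_def, ← Algebra.smul_def,
        LinearMap.smul_apply, hpow, vecMul_smul]
  obtain ⟨x, hx⟩ := Module.exists_ker_toSpanSingleton_eq_annihilator F[X] (Module.AEval' φ)
  set v := (Module.AEval'.of φ).symm x with hv
  have hann : ∀ P : F[X], v ᵥ* aeval A P = 0 → aeval A P = 0 := by
    intro P hP
    have h1 : P • x = 0 := by
      have : x = Module.AEval'.of φ v := by simp [hv]
      rw [this]
      have h2 := Module.AEval.of_aeval_smul (R := F) (M := Fin n → F) (a := φ) P v
      rw [← h2]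
      have : aeval φ P • v = 0 := by
        rw [← hP, ← hφ]; rfl
      rw [this, map_zero]
    have h2 : P ∈ Module.annihilator F[X] (Module.AEval' φ) := by
      rw [← hx]; simpa using h1
    rw [Module.mem_annihilator] at h2
    have h3 : ∀ w, w ᵥ* aeval A P = 0 := by
      intro w
      rw [← hφ]
      have := h2 (Module.AEval'.of φ w)
      rw [← Module.AEval.of_aeval_smul (R := F) (M := Fin n → F) (a := φ) P w] at this
      simpa using this
    ext i j
    simpa using congrFun (h3 (Pi.single i 1)) j
  refine ⟨v, ?_⟩
  rw [← vecMul_injective_iff_isUnit]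
  refine (injective_iff_map_eq_zero (krylov A v).vecMulLinear).2 fun c hc => ?_
  have h1 : aeval A (∑ i : Fin n, C (c i) * X ^ (i : ℕ)) = 0 := by
    refine hann _ ?_
    rw [← vecMul_krylov]
    exact hc
  have h2 := hA.charpoly_dvd_iff.2 (hA.aeval_eq_zero_iff.1 h1)
  have h3 : (∑ i : Fin n, C (c i) * X ^ (i : ℕ)) = 0 := by
    refine eq_zero_of_dvd_of_degree_lt h2 ?_
    rw [charpoly_degree_eq_dim, Fintype.card_fin]
    exact degree_sum_fin_lt c
  ext i
  have h4 := congrArg (fun p => coeff p (i : ℕ)) h3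
  simpa [finsetSum_coeff, coeff_X_pow, Fin.val_inj] using h4

/-- The companion matrix of a monic polynomial of degree `n`. -/
def companionMat (f : F[X]) (n : ℕ) : Matrix (Fin n) (Fin n) F :=
  Matrix.of fun i j => if (i : ℕ) + 1 = n then -f.coeff j else if (j : ℕ) = i + 1 then 1 else 0

theorem sum_companionMat_smul {V : Type*} [AddCommGroup V] [Module F V] {f : F[X]} (hf : f.Monic)
    (hn : f.natDegree = n) (u : ℕ → V) (hu : f.sum (fun k a => a • u k) = 0) (i : Fin n) :
    ∑ j : Fin n, companionMat f n i j • u j = u (i + 1) := by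
  by_cases hi : (i : ℕ) + 1 = n
  · have h : ∑ j : Fin n, companionMat f n i j • u j = - ∑ j : Fin n, f.coeff j • u j := by
      simp [companionMat, hi]
    rw [h, hi, Fin.sum_univ_eq_sum_range (fun j => f.coeff j • u j), eq_comm]
    rw [sum_over_range _ (by simp), hn, Finset.sum_range_succ] at hu
    have h1 : f.coeff n = 1 := by rw [← hn]; exact hf
    rw [h1, one_smul] at hu
    exact eq_neg_of_add_eq_zero_right hu
  · rw [Finset.sum_eq_single ⟨i + 1, by omega⟩]
    · simp [companionMat, hi]
    · intro j _ hj
      have : (j : ℕ) ≠ i + 1 := fun h => hj (Fin.ext h)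
      simp [companionMat, hi, this]
    · simp

theorem krylov_mul (A : Matrix (Fin n) (Fin n) F) (v : Fin n → F) :
    krylov A v * A = companionMat A.charpoly n * krylov A v := by
  have h := sum_companionMat_smul (charpoly_monic A)
    (by rw [charpoly_natDegree_eq_dim, Fintype.card_fin]) (fun k => v ᵥ* A ^ k) (by
      have h0 := aeval_self_charpoly A
      rw [aeval_eq_sum_range] at h0
      rw [sum_over_range _ (by simp)]
      simp only [← vecMul_smul]
      rw [← vecMul_sum, h0, vecMul_zero])
  ext i j
  have hi := congrFun (h i) j
  have hl : (krylov A v * A) i j = (v ᵥ* A ^ ((i : ℕ) + 1)) j := by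
    rw [pow_succ, ← vecMul_vecMul]
    rfl
  rw [hl, ← hi, Matrix.mul_apply]
  simp [krylov]

theorem IsEigenset.exists_similar_companionMat {A : Matrix (Fin n) (Fin n) F} {S : Finset K}
    (hA : IsEigenset A S) :
    ∃ G, IsUnit G ∧ G * A = companionMat A.charpoly n * G := by
  obtain ⟨v, hv⟩ := hA.exists_isUnit_krylov
  exact ⟨_, hv, krylov_mul A v⟩

theorem IsEigenset.exists_similar {A B : Matrix (Fin n) (Fin n) F} {S : Finset K}
    (hA : IsEigenset A S) (hB : IsEigenset B S) :
    ∃ G, IsUnit G ∧ G * A = B * G := by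
  obtain ⟨G, hG, hGA⟩ := hA.exists_similar_companionMat
  obtain ⟨H, hH, hHB⟩ := hB.exists_similar_companionMat
  rw [(isEigenset_iff_charpoly_eq hA).1 hB] at hHB
  obtain ⟨J, hHJ, hJH⟩ := isUnit_iff_exists.1 hH
  refine ⟨J * G, (IsUnit.of_mul_eq_one _ hJH).mul hG, ?_⟩
  have hJ : J * companionMat A.charpoly n = B * J := by
    calc J * companionMat A.charpoly n = J * (companionMat A.charpoly n * H) * J := by
          rw [Matrix.mul_assoc, Matrix.mul_assoc, hHJ, Matrix.mul_one]
      _ = B * J := by rw [← hHB, ← Matrix.mul_assoc, hJH, Matrix.one_mul]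
  rw [Matrix.mul_assoc, hGA, ← Matrix.mul_assoc, hJ, Matrix.mul_assoc]

/-- The commutant of a matrix with simple eigenvalues consists of polynomials in it. -/
theorem IsEigenset.exists_aeval_eq {A Z : Matrix (Fin n) (Fin n) F} {S : Finset K}
    (hA : IsEigenset A S) (hZ : A * Z = Z * A) : ∃ P : F[X], aeval A P = Z := by
  obtain ⟨v, hv⟩ := hA.exists_isUnit_krylov
  obtain ⟨c, hc⟩ := vecMul_surjective_iff_isUnit.2 hv (v ᵥ* Z)
  refine ⟨∑ i : Fin n, C (c i) * X ^ (i : ℕ), hv.mul_left_cancel ?_⟩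
  simp only [vecMul_krylov] at hc
  set P : F[X] := ∑ i : Fin n, C (c i) * X ^ (i : ℕ)
  have key : ∀ k : ℕ, (v ᵥ* A ^ k) ᵥ* aeval A P = (v ᵥ* A ^ k) ᵥ* Z := by
    intro k
    have h1 : A ^ k * Z = Z * A ^ k := Commute.pow_left hZ k
    have h2 : A ^ k * aeval A P = aeval A P * A ^ k := by
      have : A ^ k = aeval A (X ^ k : F[X]) := by simp
      rw [this, ← map_mul, ← map_mul, mul_comm]
    rw [vecMul_vecMul, vecMul_vecMul, h1, h2, ← vecMul_vecMul, ← vecMul_vecMul, hc]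
  ext i j
  exact congrFun (key i) j

end Eigenset

section Unitary

open Function

variable {F K : Type*} [Field F] [Field K] [Algebra F K] {n : ℕ}
variable {σ : F →+* F} {τ : K →+* K} {q : ℕ}

theorem IsEigenset.zero_notMem {A : Matrix (Fin n) (Fin n) F} {S : Finset K}
    (hA : IsEigenset A S) (hu : IsUnit A) : (0 : K) ∉ S := by
  rw [hA.mem_iff]
  have : (A.map (algebraMap F K)).det ≠ 0 := by
    rw [← RingHom.mapMatrix_apply, ← RingHom.map_det]
    simpa using (A.isUnit_iff_isUnit_det.1 hu).ne_zero
  simpa [Matrix.det_neg] using this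

/-- The eigenvalues of an isometry of a Hermitian form are permuted by the twisted Frobenius. -/
theorem IsEigenset.twist_mem (h : IsFrobeniusExtension σ τ q) {A H : Matrix (Fin n) (Fin n) F}
    {S : Finset K} (hA : IsEigenset A S) (hu : IsUnit A) (hH : IsUnit H)
    (hAH : A * H * sigmaT σ A = H) : ∀ x ∈ S, twist τ x ∈ S := by
  intro x hx
  have hx0 : x ≠ 0 := fun h0 => hA.zero_notMem hu (h0 ▸ hx)
  obtain ⟨w, hw0, hw⟩ := hA.mem_iff_vecMul.1 hx
  have hτx : τ x ≠ 0 := by simpa using hx0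
  set i := algebraMap F K
  have h1 : (sigmaT σ A).map i *ᵥ (τ ∘ w) = τ x • (τ ∘ w) := by
    ext j
    have := congrArg τ (congrFun hw j)
    simp only [vecMul, dotProduct, map_sum, map_mul, Matrix.map_apply, Pi.smul_apply,
      smul_eq_mul] at this
    simp only [mulVec, dotProduct, sigmaT, Matrix.map_apply, Matrix.transpose_apply,
      Function.comp_apply, Pi.smul_apply, smul_eq_mul, ← this]
    exact Finset.sum_congr rfl fun k _ => by rw [h.tau_algebraMap, mul_comm]
  have h2 : A.map i * H.map i * (sigmaT σ A).map i = H.map i := by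
    rw [← Matrix.map_mul, ← Matrix.map_mul, hAH]
  have hHi : IsUnit (H.map i) := hH.map (i.mapMatrix (m := Fin n))
  refine hA.mem_iff_mulVec.2 ⟨H.map i *ᵥ (τ ∘ w), ?_, ?_⟩
  · intro h0
    rw [← mulVec_zero (H.map i)] at h0
    have h3 := mulVec_injective_iff_isUnit.2 hHi h0
    apply hw0
    ext j
    simpa using congrFun h3 j
  · have h3 := congrArg (fun B => B *ᵥ (τ ∘ w)) h2
    simp only [← mulVec_mulVec, h1, mulVec_smul] at h3
    conv_rhs => rw [← h3]
    rw [smul_smul, twist, inv_mul_cancel₀ hτx, one_smul]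

/-- The adjoint of a polynomial in an isometry. -/
theorem IsEigenset.exists_adjoint (h : IsFrobeniusExtension σ τ q)
    {A H : Matrix (Fin n) (Fin n) F} {S : Finset K} (hA : IsEigenset A S) (h0 : (0 : K) ∉ S)
    (hS : ∀ x ∈ S, twist τ x ∈ S) (hAH : A * H * sigmaT σ A = H) (P : F[X]) :
    ∃ Q : F[X], H * sigmaT σ (aeval A P) = aeval A Q * H ∧
      ∀ x ∈ S, aeval (twist τ x) Q = τ (aeval x P) := by
  obtain ⟨R, hR⟩ := h.exists_aeval_eq (fun x hx => IsFrobeniusExtension.tau_tau_mem hS hx)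
    (fun x => x⁻¹) (fun x _ => by simp)
  have hRA : aeval A R * A = 1 := by
    have : aeval A (R * X) = aeval A (1 : F[X]) := hA.aeval_eq_iff.2 fun x hx => by
      have : x ≠ 0 := fun hx0 => h0 (hx0 ▸ hx)
      simp [hR x hx, this]
    simpa using this
  have hH : H * sigmaT σ A = aeval A R * H := by
    conv_rhs => rw [← hAH]
    rw [Matrix.mul_assoc A, ← Matrix.mul_assoc (aeval A R), hRA, Matrix.one_mul]
  have hpow : ∀ k, H * sigmaT σ A ^ k = aeval A R ^ k * H := by
    intro k
    induction k with
    | zero => simp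
    | succ k ih =>
      rw [pow_succ, ← Matrix.mul_assoc, ih, Matrix.mul_assoc, hH, pow_succ, Matrix.mul_assoc]
  have hpoly : ∀ Q : F[X], H * aeval (sigmaT σ A) Q = aeval (aeval A R) Q * H := by
    intro Q
    induction Q using Polynomial.induction_on' with
    | add p q hp hq => simp only [map_add, Matrix.mul_add, Matrix.add_mul, hp, hq]
    | monomial k a =>
      rw [aeval_monomial, aeval_monomial, ← Algebra.smul_def, ← Algebra.smul_def,
        Matrix.mul_smul, Matrix.smul_mul, hpow]
  refine ⟨(P.map σ).comp R, ?_, fun x hx => ?_⟩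
  · rw [sigmaT_aeval, hpoly, aeval_comp]
  · rw [aeval_comp, hR _ (hS x hx), twist, inv_inv, h.aeval_map_sigma]

/-- An `M`-th root inside the unitary group amounts to an equivariant choice of `M`-th roots of
the eigenvalues. -/
theorem exists_unitary_root_iff (h : IsFrobeniusExtension σ τ q) {A : unitaryGrp σ n}
    {S : Finset K} (hA : IsEigenset ((A : GL (Fin n) F) : Matrix (Fin n) (Fin n) F) S)
    (h0 : (0 : K) ∉ S) (hS : ∀ x ∈ S, twist τ x ∈ S) {M : ℕ} (hM : M ≠ 0) :
    (∃ B : unitaryGrp σ n, B ^ M = A) ↔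
      ∃ b : K → K, ∀ x ∈ S, b x ^ M = x ∧ b (twist τ x) = twist τ (b x) := by
  set A' : Matrix (Fin n) (Fin n) F := ((A : GL (Fin n) F) : Matrix (Fin n) (Fin n) F) with hA'
  have hAH : A' * antidiagMat F n * sigmaT σ A' = antidiagMat F n := mem_unitaryGrp.1 A.2
  constructor
  · rintro ⟨B, hB⟩
    set B' : Matrix (Fin n) (Fin n) F := ((B : GL (Fin n) F) : Matrix (Fin n) (Fin n) F)
    have hBA : B' ^ M = A' := by rw [hA', ← hB]; simp [B']
    obtain ⟨P, hP⟩ := hA.exists_aeval_eq (Z := B') (by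
      rw [← hBA]; exact (Commute.self_pow B' M).symm.eq)
    have hBH : B' * antidiagMat F n * sigmaT σ B' = antidiagMat F n := mem_unitaryGrp.1 B.2
    obtain ⟨Q, hQ, hQP⟩ := hA.exists_adjoint h h0 hS hAH P
    refine ⟨fun x => aeval x P, fun x hx => ⟨?_, ?_⟩⟩
    · have : aeval A' (P ^ M) = aeval A' (X : F[X]) := by rw [map_pow, hP, hBA, aeval_X]
      simpa using hA.aeval_eq_iff.1 this x hx
    · have : aeval A' (P * Q) = aeval A' (1 : F[X]) := by
        rw [← hP, Matrix.mul_assoc, hQ, ← Matrix.mul_assoc, ← map_mul] at hBH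
        have := congrArg (· * antidiagMat F n) hBH
        simp only [Matrix.mul_assoc, antidiagMat_mul_self, Matrix.mul_one] at this
        rw [this, map_one]
      have := hA.aeval_eq_iff.1 this _ (hS x hx)
      rw [map_mul, hQP x hx, map_one] at this
      exact eq_inv_of_mul_eq_one_left this
  · rintro ⟨b, hb⟩
    obtain ⟨P, hP⟩ := h.exists_aeval_eq (fun x hx => IsFrobeniusExtension.tau_tau_mem hS hx) b
      (fun x hx => by
        rw [← twist_twist, (hb _ (hS x hx)).2, (hb x hx).2, twist_twist])
    obtain ⟨Q, hQ, hQP⟩ := hA.exists_adjoint h h0 hS hAH P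
    have hBH : aeval A' P * antidiagMat F n * sigmaT σ (aeval A' P) = antidiagMat F n := by
      rw [Matrix.mul_assoc, hQ, ← Matrix.mul_assoc, ← map_mul]
      have : aeval A' (P * Q) = aeval A' (1 : F[X]) := by
        refine hA.aeval_eq_iff.2 fun x hx => ?_
        obtain ⟨y, hy, rfl⟩ := IsFrobeniusExtension.exists_twist_eq hS hx
        have hby : b y ≠ 0 := by
          intro hb0
          have := (hb y hy).1
          rw [hb0, zero_pow hM] at this
          exact h0 (this ▸ hy)
        rw [map_mul, hQP y hy, hP _ hx, hP y hy, (hb y hy).2, map_one, twist,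
          inv_mul_cancel₀ (by simpa using hby)]
      rw [this, map_one, Matrix.one_mul]
    obtain ⟨B, hB⟩ := isUnit_of_mul_antidiagMat_mul hBH
    rw [← hB] at hBH
    refine ⟨⟨B, mem_unitaryGrp.2 hBH⟩, Subtype.ext (Units.ext ?_)⟩
    have : aeval A' (P ^ M) = aeval A' (X : F[X]) := by
      refine hA.aeval_eq_iff.2 fun x hx => ?_
      rw [map_pow, hP x hx, (hb x hx).1, aeval_X]
    rw [map_pow, aeval_X, ← hB] at this
    simpa using this

/-- Unitary matrices with the same simple eigenvalues are conjugate in the unitary group. -/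
theorem isConj_of_isEigenset [IsAlgClosed K] (h : IsFrobeniusExtension σ τ q)
    {A B : unitaryGrp σ n} {S : Finset K}
    (hA : IsEigenset ((A : GL (Fin n) F) : Matrix (Fin n) (Fin n) F) S)
    (hB : IsEigenset ((B : GL (Fin n) F) : Matrix (Fin n) (Fin n) F) S)
    (h0 : (0 : K) ∉ S) (hS : ∀ x ∈ S, twist τ x ∈ S) : IsConj A B := by
  obtain ⟨G, hG, hGAB⟩ := hA.exists_similar hB
  obtain ⟨G, rfl⟩ := hG
  set A' : Matrix (Fin n) (Fin n) F := ((A : GL (Fin n) F) : Matrix (Fin n) (Fin n) F) with hA'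
  set B' : Matrix (Fin n) (Fin n) F := ((B : GL (Fin n) F) : Matrix (Fin n) (Fin n) F) with hB'
  set L := antidiagMat F n with hL
  have hLL : L * L = 1 := antidiagMat_mul_self
  have hAH : A' * L * sigmaT σ A' = L := mem_unitaryGrp.1 A.2
  have hBH : B' * L * sigmaT σ B' = L := mem_unitaryGrp.1 B.2
  set G' : Matrix (Fin n) (Fin n) F := (G : Matrix (Fin n) (Fin n) F)
  set Gi : Matrix (Fin n) (Fin n) F := ((G⁻¹ : GL (Fin n) F) : Matrix (Fin n) (Fin n) F)
  have hGGi : G' * Gi = 1 := G.mul_inv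
  have hGiG : Gi * G' = 1 := G.inv_mul
  set H := Gi * L * sigmaT σ Gi with hH
  have hGiB : Gi * B' = A' * Gi := by
    calc Gi * B' = Gi * (B' * G') * Gi := by
          rw [Matrix.mul_assoc, Matrix.mul_assoc, hGGi, Matrix.mul_one]
      _ = A' * Gi := by rw [← hGAB, ← Matrix.mul_assoc, hGiG, Matrix.one_mul]
  have hAHH : A' * H * sigmaT σ A' = H := by
    calc A' * H * sigmaT σ A' = (A' * Gi) * L * (sigmaT σ (A' * Gi)) := by
          simp only [hH, sigmaT_mul, Matrix.mul_assoc]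
      _ = Gi * (B' * L * sigmaT σ B') * sigmaT σ Gi := by
          rw [← hGiB, sigmaT_mul]; simp only [Matrix.mul_assoc]
      _ = H := by rw [hBH]
  have hsymm : sigmaT σ H = H := by
    rw [hH, sigmaT_mul, sigmaT_mul, sigmaT_sigmaT h.sigma_sigma, sigmaT_antidiagMat,
      Matrix.mul_assoc]
  have hHu : IsUnit H := by
    refine ((G⁻¹).isUnit.mul (IsUnit.of_mul_eq_one _ hLL)).mul
      (IsUnit.of_mul_eq_one (sigmaT σ G') ?_)
    rw [← sigmaT_mul, hGGi, sigmaT_one]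
  obtain ⟨P, hP⟩ := hA.exists_aeval_eq (Z := H * L) (by
    have hD : sigmaT σ A' * (L * A' * L) = 1 := by
      rw [_root_.mul_eq_one_comm, Matrix.mul_assoc, Matrix.mul_assoc, ← Matrix.mul_assoc A', hAH,
        hLL]
    calc A' * (H * L) = A' * H * (sigmaT σ A' * (L * A' * L)) * L := by
          rw [hD, Matrix.mul_one, Matrix.mul_assoc A' H L]
      _ = (A' * H * sigmaT σ A') * L * A' * (L * L) := by simp only [Matrix.mul_assoc]
      _ = H * L * A' := by rw [hAHH, hLL, Matrix.mul_one])
  have hHP : aeval A' P * L = H := by rw [hP, Matrix.mul_assoc, hLL, Matrix.mul_one]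
  obtain ⟨P', hP', hPP'⟩ := hA.exists_adjoint h h0 hS hAH P
  have hPτ : ∀ x ∈ S, aeval (twist τ x) P = τ (aeval x P) := by
    intro x hx
    rw [← hPP' x hx]
    refine hA.aeval_eq_iff.1 ?_ _ (hS x hx)
    have : aeval A' P * L = aeval A' P' * L := by
      rw [← hP', hHP, ← hsymm, ← hHP, sigmaT_mul, sigmaT_antidiagMat]
    have := congrArg (· * L) this
    simpa only [Matrix.mul_assoc, hLL, Matrix.mul_one] using this
  have hP0 : ∀ x ∈ S, aeval x P ≠ 0 := by
    intro x hx hx0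
    obtain ⟨w, hw0, hw⟩ := hA.mem_iff_mulVec.1 hx
    have h1 := map_aeval_mulVec hw P
    rw [hx0, zero_smul] at h1
    have h2 : IsUnit ((aeval A' P).map (algebraMap F K)) := by
      refine IsUnit.map ((algebraMap F K).mapMatrix (m := Fin n)) ?_
      rw [hP]
      exact hHu.mul (IsUnit.of_mul_eq_one _ hLL)
    rw [← mulVec_zero ((aeval A' P).map (algebraMap F K))] at h1
    exact hw0 (mulVec_injective_iff_isUnit.2 h2 h1)
  obtain ⟨e, he0, he⟩ := h.exists_norm_eq hS (fun x => aeval x P) hP0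
  obtain ⟨Q, hQ⟩ := h.exists_aeval_eq (fun x hx => IsFrobeniusExtension.tau_tau_mem hS hx) e
    (fun x hx => by
      have h1 := he x hx
      have h2 := he _ (hS x hx)
      rw [hPτ _ (hS x hx)] at h2
      rw [← h1, map_mul, twist_twist] at h2
      refine mul_right_cancel₀ (b := τ (e (twist τ x))) ?_ (h2.trans (mul_comm _ _))
      simpa using he0 _ (hS x hx))
  obtain ⟨Q', hQ', hQQ'⟩ := hA.exists_adjoint h h0 hS hAH Q
  have hQH : aeval A' Q * L * sigmaT σ (aeval A' Q) = H := by
    rw [Matrix.mul_assoc, hQ', ← Matrix.mul_assoc, ← map_mul, ← hHP]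
    congr 1
    refine hA.aeval_eq_iff.2 fun x hx => ?_
    obtain ⟨y, hy, rfl⟩ := IsFrobeniusExtension.exists_twist_eq hS hx
    rw [map_mul, hQQ' y hy, hQ _ hx, hQ y hy, he y hy]
  have hU : (G' * aeval A' Q) * L * sigmaT σ (G' * aeval A' Q) = L := by
    calc (G' * aeval A' Q) * L * sigmaT σ (G' * aeval A' Q)
        = G' * (aeval A' Q * L * sigmaT σ (aeval A' Q)) * sigmaT σ G' := by
          rw [sigmaT_mul]; simp only [Matrix.mul_assoc]
      _ = (G' * Gi) * L * sigmaT σ (G' * Gi) := by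
          rw [hQH, hH, sigmaT_mul]; simp only [Matrix.mul_assoc]
      _ = L := by rw [hGGi, sigmaT_one, Matrix.one_mul, Matrix.mul_one]
  obtain ⟨U, hUeq⟩ := isUnit_of_mul_antidiagMat_mul hU
  rw [← hUeq] at hU
  refine isConj_iff.2 ⟨⟨U, mem_unitaryGrp.2 hU⟩, ?_⟩
  rw [mul_inv_eq_iff_eq_mul]
  refine Subtype.ext (Units.ext ?_)
  change (U : Matrix (Fin n) (Fin n) F) * A' = B' * U
  rw [hUeq, ← Matrix.mul_assoc, ← hGAB, Matrix.mul_assoc, Matrix.mul_assoc]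
  congr 1
  simpa using congrArg (aeval A') (mul_comm Q X)

end Unitary

section Hermitian

variable {F K : Type*} [Field F] [Field K] [Algebra F K] {n : ℕ}
variable {σ : F →+* F} {τ : K →+* K} {q : ℕ}

theorem IsFrobeniusExtension.exists_mul_sigma_eq [IsAlgClosed K]
    (h : IsFrobeniusExtension σ τ q) {a : F} (ha : a ≠ 0) (hσ : σ a = a) :
    ∃ c, c * σ c = a := by
  obtain ⟨z, hz⟩ := IsAlgClosed.exists_pow_nat_eq (algebraMap F K a) (Nat.succ_pos q)
  rw [Nat.succ_eq_add_one, pow_succ', ← h.tau_apply] at hz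
  have hz0 : τ z ≠ 0 := by
    intro h0
    rw [h0, mul_zero, eq_comm] at hz
    exact ha (by simpa using hz)
  obtain ⟨c, rfl⟩ := h.descent z (by
    have h1 : τ z * τ (τ z) = z * τ z := by rw [← map_mul, hz, h.tau_algebraMap, hσ]
    rw [mul_comm] at h1
    exact mul_right_cancel₀ hz0 h1)
  refine ⟨c, (algebraMap F K).injective ?_⟩
  rw [map_mul, ← h.tau_algebraMap, hz]

/-- The sesquilinear form on row vectors with Gram matrix `H`. -/
def sesqForm (σ : F →+* F) (H : Matrix (Fin n) (Fin n) F) (u v : Fin n → F) : F :=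
  u ⬝ᵥ H *ᵥ (σ ∘ v)

theorem sesqForm_add_left (H : Matrix (Fin n) (Fin n) F) (u u' v : Fin n → F) :
    sesqForm σ H (u + u') v = sesqForm σ H u v + sesqForm σ H u' v :=
  add_dotProduct _ _ _

theorem sesqForm_smul_left (H : Matrix (Fin n) (Fin n) F) (a : F) (u v : Fin n → F) :
    sesqForm σ H (a • u) v = a * sesqForm σ H u v :=
  smul_dotProduct _ _ _

theorem sesqForm_sub_left (H : Matrix (Fin n) (Fin n) F) (u u' v : Fin n → F) :
    sesqForm σ H (u - u') v = sesqForm σ H u v - sesqForm σ H u' v :=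
  sub_dotProduct _ _ _

theorem sesqForm_sum_left {ι : Type*} (H : Matrix (Fin n) (Fin n) F) (s : Finset ι)
    (u : ι → Fin n → F) (v : Fin n → F) :
    sesqForm σ H (∑ i ∈ s, u i) v = ∑ i ∈ s, sesqForm σ H (u i) v :=
  sum_dotProduct _ _ _

theorem sesqForm_comm {H : Matrix (Fin n) (Fin n) F} (hσ : ∀ a, σ (σ a) = a)
    (hH : sigmaT σ H = H) (u v : Fin n → F) : σ (sesqForm σ H u v) = sesqForm σ H v u := by
  simp only [sesqForm, dotProduct, mulVec, map_sum, map_mul, Finset.mul_sum, Function.comp_apply, hσ]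
  rw [Finset.sum_comm]
  refine Finset.sum_congr rfl fun i _ => Finset.sum_congr rfl fun j _ => ?_
  have : σ (H j i) = H i j := congrFun (congrFun hH i) j
  rw [this]
  ring

theorem exists_sesqForm_ne_zero {H : Matrix (Fin n) (Fin n) F} (hH : IsUnit H) {u : Fin n → F}
    (hu : u ≠ 0) : ∃ v, sesqForm σ H u v ≠ 0 := by
  have h1 : u ᵥ* H ≠ 0 := by
    intro h0
    rw [← zero_vecMul H] at h0
    exact hu (vecMul_injective_iff_isUnit.2 hH h0)
  obtain ⟨j, hj⟩ := Function.ne_iff.1 h1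
  refine ⟨Pi.single j 1, ?_⟩
  have : σ ∘ (Pi.single j 1 : Fin n → F) = Pi.single j 1 := by
    ext k
    by_cases hk : k = j
    · subst hk; simp
    · simp [hk]
  rw [sesqForm, this, dotProduct_mulVec]
  simpa using hj

theorem exists_sesqForm_self_ne_zero (h : IsFrobeniusExtension σ τ q)
    {H : Matrix (Fin n) (Fin n) F} (hH : sigmaT σ H = H) (W : Submodule F (Fin n → F))
    {u v : Fin n → F} (hu : u ∈ W) (hv : v ∈ W) (huv : sesqForm σ H u v ≠ 0) :
    ∃ w ∈ W, sesqForm σ H w w ≠ 0 := by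
  by_contra! hall
  have hcomm := sesqForm_comm h.sigma_sigma hH
  have key : ∀ d : F, d + σ d = 0 := by
    intro d
    set c := d * (sesqForm σ H u v)⁻¹ with hc
    have h1 := hall _ (W.add_mem (W.smul_mem c hu) hv)
    have h2 : sesqForm σ H (c • u) (c • u + v) = d := by
      rw [← hcomm, sesqForm_add_left, sesqForm_smul_left, ← hcomm (c • u) u, sesqForm_smul_left,
        hall u hu, mul_zero, map_zero, mul_zero, zero_add, hcomm, sesqForm_smul_left, hc,
        inv_mul_cancel_right₀ huv]
    have h3 : sesqForm σ H v (c • u + v) = σ d := by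
      rw [← hcomm, sesqForm_add_left, sesqForm_smul_left, hall v hv, add_zero, hc,
        inv_mul_cancel_right₀ huv]
    rw [sesqForm_add_left, h2, h3] at h1
    exact h1
  obtain ⟨a, ha⟩ := h.exists_sigma_ne
  have h1 := key 1
  have h2 := key a
  rw [map_one] at h1
  apply ha
  have h3 : a * (1 + 1) = 0 := by rw [h1, mul_zero]
  linear_combination h2 - h3

theorem exists_orthonormal [IsAlgClosed K] (h : IsFrobeniusExtension σ τ q)
    {H : Matrix (Fin n) (Fin n) F} (hH : sigmaT σ H = H) (hHu : IsUnit H) (k : ℕ) (hk : k ≤ n) :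
    ∃ v : Fin k → Fin n → F, ∀ i j, sesqForm σ H (v i) (v j) = if i = j then 1 else 0 := by
  have hcomm := sesqForm_comm h.sigma_sigma hH
  induction k with
  | zero => exact ⟨fun i => i.elim0, fun i => i.elim0⟩
  | succ k ih =>
    obtain ⟨v, hv⟩ := ih (by omega)
    let W : Submodule F (Fin n → F) :=
      { carrier := {w | ∀ j, sesqForm σ H w (v j) = 0}
        add_mem' := fun ha hb j => by rw [sesqForm_add_left, ha j, hb j, add_zero]
        zero_mem' := fun j => by simp [sesqForm]
        smul_mem' := fun c w hw j => by rw [sesqForm_smul_left, hw j, mul_zero] }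
    let p : (Fin n → F) → (Fin n → F) := fun x => x - ∑ i, sesqForm σ H x (v i) • v i
    have hp : ∀ x, p x ∈ W := by
      intro x j
      simp only [p, sesqForm_sub_left, sesqForm_sum_left, sesqForm_smul_left, hv]
      simp
    obtain ⟨u, hu⟩ : ∃ u, u ∉ Submodule.span F (Set.range v) := by
      by_contra! hall
      have h1 : Submodule.span F (Set.range v) = ⊤ := Submodule.eq_top_iff'.2 hall
      have h2 := finrank_range_le_card (R := F) v
      rw [Set.finrank, h1, finrank_top, Module.finrank_fin_fun, Fintype.card_fin] at h2
      omega
    have hpu : p u ≠ 0 := by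
      intro h0
      apply hu
      rw [sub_eq_zero.1 h0]
      exact Submodule.sum_mem _ fun i _ =>
        Submodule.smul_mem _ _ (Submodule.subset_span (Set.mem_range_self i))
    obtain ⟨x, hx⟩ := exists_sesqForm_ne_zero (σ := σ) hHu hpu
    have hx' : sesqForm σ H (p x) (p u) ≠ 0 := by
      have h1 : sesqForm σ H (p x) (p u) = sesqForm σ H x (p u) := by
        have : ∀ i, sesqForm σ H (v i) (p u) = 0 := fun i => by rw [← hcomm, hp u i, map_zero]
        simp only [p] at this ⊢
        rw [sesqForm_sub_left, sesqForm_sum_left]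
        simp [sesqForm_smul_left, this]
      rw [h1, ← hcomm]
      simpa using hx
    obtain ⟨w, hw, hww⟩ := exists_sesqForm_self_ne_zero h hH W (hp x) (hp u) hx'
    obtain ⟨c, hc⟩ := h.exists_mul_sigma_eq (inv_ne_zero hww) (by rw [map_inv₀, hcomm])
    have hwj : ∀ j, sesqForm σ H (c • w) (v j) = 0 := W.smul_mem c hw
    refine ⟨Fin.cons (c • w) v, fun i j => ?_⟩
    refine Fin.cases ?_ (fun i => ?_) i <;> refine Fin.cases ?_ (fun j => ?_) j
    · simp only [Fin.cons_zero, if_true]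
      rw [sesqForm_smul_left, ← hcomm, sesqForm_smul_left, map_mul, hcomm, ← mul_assoc, hc,
        inv_mul_cancel₀ hww]
    · simpa [(Fin.succ_ne_zero j).symm] using hwj j
    · rw [← hcomm]
      simpa using hwj i
    · simpa using hv i j

/-- A nondegenerate Hermitian form over a finite field has an orthonormal basis. -/
theorem exists_mul_mul_sigmaT_eq_one [IsAlgClosed K] (h : IsFrobeniusExtension σ τ q)
    {H : Matrix (Fin n) (Fin n) F} (hH : sigmaT σ H = H) (hHu : IsUnit H) :
    ∃ G : Matrix (Fin n) (Fin n) F, G * H * sigmaT σ G = 1 := by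
  obtain ⟨v, hv⟩ := exists_orthonormal h hH hHu n le_rfl
  refine ⟨Matrix.of v, ?_⟩
  ext i j
  rw [Matrix.one_apply, ← hv i j, Matrix.mul_assoc]
  rfl

theorem exists_mul_mul_sigmaT_eq_antidiagMat [IsAlgClosed K] (h : IsFrobeniusExtension σ τ q)
    {H : Matrix (Fin n) (Fin n) F} (hH : sigmaT σ H = H) (hHu : IsUnit H) :
    ∃ G : Matrix (Fin n) (Fin n) F, G * H * sigmaT σ G = antidiagMat F n := by
  obtain ⟨G, hG⟩ := exists_mul_mul_sigmaT_eq_one h hH hHu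
  obtain ⟨J, hJ⟩ := exists_mul_mul_sigmaT_eq_one h (sigmaT_antidiagMat σ (n := n))
    (IsUnit.of_mul_eq_one _ antidiagMat_mul_self)
  obtain ⟨J', h1, h2⟩ := isUnit_iff_exists.1
    (IsUnit.of_mul_eq_one _ ((Matrix.mul_assoc _ _ _).symm.trans hJ))
  refine ⟨J' * G, ?_⟩
  calc J' * G * H * sigmaT σ (J' * G) = J' * (G * H * sigmaT σ G) * sigmaT σ J' := by
        rw [sigmaT_mul]; simp only [Matrix.mul_assoc]
    _ = (J' * J) * antidiagMat F n * sigmaT σ (J' * J) := by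
        rw [hG, ← hJ, sigmaT_mul]; simp only [Matrix.mul_assoc]
    _ = antidiagMat F n := by rw [h2, sigmaT_one, Matrix.one_mul, Matrix.mul_one]

end Hermitian

section Existence

open Function

variable {F K : Type*} [Field F] [Field K] [Algebra F K] {n : ℕ}
variable {σ : F →+* F} {τ : K →+* K} {q : ℕ}

theorem sum_companionMat_mul_pow {f : F[X]} (hf : f.Monic) (hn : f.natDegree = n) {x : K}
    (hx : aeval x f = 0) (i : Fin n) :
    ∑ j : Fin n, algebraMap F K (companionMat f n i j) * x ^ (j : ℕ) = x ^ ((i : ℕ) + 1) := by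
  have := sum_companionMat_smul hf hn (fun k => x ^ k) (by
    rw [aeval_eq_sum_range] at hx
    rw [sum_over_range _ (by simp), hx]) i
  simpa [Algebra.smul_def] using this

theorem isEigenset_companionMat {f : F[X]} (hf : f.Monic) (hn : f.natDegree = n) {x : Fin n → K}
    (hx : Injective x) (hroot : ∀ i, aeval (x i) f = 0) {S : Finset K}
    (hS : ∏ i, (X - C (x i)) = ∏ y ∈ S, (X - C y)) : IsEigenset (companionMat f n) S := by
  have hW : IsUnit (vandermonde x)ᵀ := by
    rw [isUnit_iff_isUnit_det, det_transpose]
    exact (det_vandermonde_ne_zero_iff.2 hx).isUnit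
  obtain ⟨W, hW⟩ := hW
  have hCW : (companionMat f n).map (algebraMap F K) * W = W * diagonal x := by
    rw [hW]
    ext i j
    rw [Matrix.mul_apply, mul_diagonal]
    simp only [Matrix.map_apply, transpose_apply, vandermonde_apply]
    rw [sum_companionMat_mul_pow hf hn (hroot j), pow_succ]
  have hC : (companionMat f n).map (algebraMap F K) = W.val * diagonal x * W.val⁻¹ := by
    rw [← hCW, Matrix.mul_assoc, ← coe_units_inv, Units.mul_inv, Matrix.mul_one]
  rw [IsEigenset, ← charpoly_map, hC, charpoly_units_conj, ← hS]
  simp [charpoly_diagonal]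

/-- Every stable finite set of nonzero elements is the set of eigenvalues of a unitary matrix. -/
theorem exists_unitary_isEigenset [IsAlgClosed K] (h : IsFrobeniusExtension σ τ q) {S : Finset K}
    (hcard : S.card = n) (h0 : (0 : K) ∉ S) (hS : ∀ x ∈ S, twist τ x ∈ S) :
    ∃ A : unitaryGrp σ n, IsEigenset ((A : GL (Fin n) F) : Matrix (Fin n) (Fin n) F) S := by
  classical
  obtain ⟨f, hf, hfS⟩ := h.exists_map_eq_prod
    (fun x hx => IsFrobeniusExtension.tau_tau_mem hS hx)
  let e := S.equivFinOfCardEq hcard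
  let x : Fin n → K := fun i => (e.symm i : K)
  have hxinj : Injective x := Subtype.val_injective.comp e.symm.injective
  have hxS : ∀ i, x i ∈ S := fun i => (e.symm i).2
  have hx0 : ∀ i, x i ≠ 0 := fun i hi => h0 (hi ▸ hxS i)
  have hroot : ∀ y ∈ S, aeval y f = 0 := by
    intro y hy
    rw [← eval_map_algebraMap, hfS, eval_prod]
    exact Finset.prod_eq_zero hy (by simp)
  have hdeg : f.natDegree = n := by
    rw [← natDegree_map (algebraMap F K), hfS, natDegree_prod_of_monic _ _ fun x _ =>
      monic_X_sub_C x]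
    simpa using hcard
  have hprod : ∏ i, (X - C (x i)) = ∏ y ∈ S, (X - C y) := by
    rw [← Finset.prod_coe_sort S fun y => X - C y]
    exact Fintype.prod_equiv e.symm _ _ fun i => rfl
  have hsum : ∀ g : K → K, ∑ i, g (x i) = ∑ y ∈ S, g y := by
    intro g
    rw [← Finset.sum_coe_sort S g]
    exact Fintype.sum_equiv e.symm _ _ fun i => rfl
  set Cm := companionMat f n with hCm
  have hCS : IsEigenset Cm S := isEigenset_companionMat hf hdeg hxinj (fun i => hroot _ (hxS i))
    hprod
  have hH : ∀ i j : Fin n, ∃ a : F, algebraMap F K a = ∑ y ∈ S, y ^ (i : ℕ) * y⁻¹ ^ (j : ℕ) := by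
    intro i j
    refine h.descent _ ?_
    conv_rhs => rw [← IsFrobeniusExtension.image_tau_tau (τ := τ) S
      (fun x hx => IsFrobeniusExtension.tau_tau_mem hS hx)]
    rw [Finset.sum_image fun a _ b _ hab => τ.injective (τ.injective hab)]
    simp
  choose H hH using hH
  have hsymm : sigmaT σ (Matrix.of H) = Matrix.of H := by
    ext i j
    apply (algebraMap F K).injective
    simp only [sigmaT, transpose_apply, Matrix.map_apply, Matrix.of_apply]
    rw [← h.tau_algebraMap, hH, hH]
    conv_rhs => rw [← IsFrobeniusExtension.image_twist (τ := τ) S hS]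
    rw [Finset.sum_image fun a _ b _ hab => twist_injective τ hab]
    simp only [map_sum, map_mul, map_pow, map_inv₀, twist, inv_inv]
    exact Finset.sum_congr rfl fun y _ => mul_comm _ _
  set W : Matrix (Fin n) (Fin n) K := (vandermonde x)ᵀ with hW
  set V : Matrix (Fin n) (Fin n) K := vandermonde (fun i => (x i)⁻¹) with hV
  have hHWV : (Matrix.of H).map (algebraMap F K) = W * V := by
    ext i j
    rw [Matrix.mul_apply]
    simp only [hW, hV, Matrix.map_apply, Matrix.of_apply, hH, transpose_apply, vandermonde_apply]
    exact (hsum fun y => y ^ (i : ℕ) * y⁻¹ ^ (j : ℕ)).symm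
  have hHu : IsUnit (Matrix.of H) := by
    rw [isUnit_iff_isUnit_det, isUnit_iff_ne_zero, ← (algebraMap F K).injective.ne_iff, map_zero,
      RingHom.map_det, RingHom.mapMatrix_apply, hHWV, det_mul, hW, hV, det_transpose]
    refine mul_ne_zero (det_vandermonde_ne_zero_iff.2 hxinj) (det_vandermonde_ne_zero_iff.2 ?_)
    exact fun a b hab => hxinj (inv_injective hab)
  have hCW : Cm.map (algebraMap F K) * W = W * diagonal x := by
    ext i j
    rw [Matrix.mul_apply, mul_diagonal]
    simp only [Matrix.map_apply, transpose_apply, vandermonde_apply, hW]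
    rw [sum_companionMat_mul_pow hf hdeg (hroot _ (hxS j)), pow_succ]
  have hVC : V * (sigmaT σ Cm).map (algebraMap F K) = diagonal (fun i => (x i)⁻¹) * V := by
    ext j k
    rw [Matrix.mul_apply, diagonal_mul]
    obtain ⟨y, hy, hyx⟩ := IsFrobeniusExtension.exists_twist_eq hS (hxS j)
    have hyx' : (x j)⁻¹ = τ y := by rw [← hyx, twist, inv_inv]
    simp only [hV, vandermonde_apply, sigmaT, Matrix.map_apply, transpose_apply, hyx']
    rw [← pow_succ', ← map_pow, ← sum_companionMat_mul_pow hf hdeg (hroot y hy), map_sum]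
    exact Finset.sum_congr rfl fun l _ => by
      rw [map_mul, h.tau_algebraMap, map_pow, mul_comm]
  have hCH : Cm * Matrix.of H * sigmaT σ Cm = Matrix.of H := by
    apply Matrix.map_injective (algebraMap F K).injective
    simp only [Matrix.map_mul, hHWV]
    calc Cm.map (algebraMap F K) * (W * V) * (sigmaT σ Cm).map (algebraMap F K)
        = (Cm.map (algebraMap F K) * W) * (V * (sigmaT σ Cm).map (algebraMap F K)) := by
          simp only [Matrix.mul_assoc]
      _ = W * (diagonal x * diagonal (fun i => (x i)⁻¹)) * V := by
          rw [hCW, hVC]; simp only [Matrix.mul_assoc]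
      _ = W * V := by
          rw [diagonal_mul_diagonal]
          simp [hx0]
  obtain ⟨G, hG⟩ := exists_mul_mul_sigmaT_eq_antidiagMat h hsymm hHu
  have hGu : IsUnit G := by
    refine IsUnit.of_mul_eq_one (Matrix.of H * sigmaT σ G * antidiagMat F n) ?_
    rw [← Matrix.mul_assoc, ← Matrix.mul_assoc, hG, antidiagMat_mul_self]
  obtain ⟨G, rfl⟩ := hGu
  set G' : Matrix (Fin n) (Fin n) F := (G : Matrix (Fin n) (Fin n) F)
  set Gi : Matrix (Fin n) (Fin n) F := G.val⁻¹ with hGi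
  have hGiG : Gi * G' = 1 := by rw [hGi, ← coe_units_inv, Units.inv_mul]
  have hU : (G' * Cm * Gi) * antidiagMat F n * sigmaT σ (G' * Cm * Gi) = antidiagMat F n := by
    calc (G' * Cm * Gi) * antidiagMat F n * sigmaT σ (G' * Cm * Gi)
        = (G' * Cm * (Gi * G')) * Matrix.of H * sigmaT σ (G' * Cm * (Gi * G')) := by
          rw [← hG]; simp only [sigmaT_mul, Matrix.mul_assoc]
      _ = G' * (Cm * Matrix.of H * sigmaT σ Cm) * sigmaT σ G' := by
          rw [hGiG, Matrix.mul_one, sigmaT_mul]; simp only [Matrix.mul_assoc]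
      _ = antidiagMat F n := by rw [hCH, hG]
  obtain ⟨A, hA⟩ := isUnit_of_mul_antidiagMat_mul hU
  rw [← hA] at hU
  refine ⟨⟨A, mem_unitaryGrp.2 hU⟩, (isEigenset_iff_charpoly_eq hCS).2 ?_⟩
  change (A : Matrix (Fin n) (Fin n) F).charpoly = _
  rw [hA]
  exact charpoly_units_conj G Cm

end Existence

section MinimalPolynomials

open Function

variable {F K : Type*} [Field F] [Field K] [Algebra F K]
variable {σ : F →+* F} {τ : K →+* K} {q : ℕ}

namespace IsFrobeniusExtension

theorem mem_periodicPts_twist_two (h : IsFrobeniusExtension σ τ q) (x : K) :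
    x ∈ periodicPts (twist τ)^[2] := by
  obtain ⟨k, hk, hx⟩ := h.mem_periodicPts_twist x
  exact mk_mem_periodicPts hk (hx.iterate 2)

theorem minimalPeriod_twist_two (x : K) :
    minimalPeriod (twist τ)^[2] x =
      minimalPeriod (twist τ) x / (minimalPeriod (twist τ) x).gcd 2 :=
  minimalPeriod_iterate_eq_div_gcd (by norm_num)

theorem aeval_twist_two_iterate (h : IsFrobeniusExtension σ τ q) {P : F[X]} {x : K}
    (hx : aeval x P = 0) (k : ℕ) : aeval (((twist τ)^[2])^[k] x) P = 0 := by
  induction k with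
  | zero => exact hx
  | succ k ih =>
    rw [iterate_succ_apply']
    change aeval (twist τ (twist τ _)) P = 0
    rw [twist_twist, h.aeval_tau_tau, ih, map_zero, map_zero]

variable [Algebra.IsAlgebraic F K]

/-- The roots of a minimal polynomial over `F` form a Frobenius orbit. -/
theorem map_minpoly (h : IsFrobeniusExtension σ τ q) (x : K) :
    (minpoly F x).map (algebraMap F K) = ∏ y ∈ orbitFinset (twist τ)^[2] x, (X - C y) := by
  have hmem : ∀ y, y ∈ orbitFinset (twist τ)^[2] x ↔ ∃ k, ((twist τ)^[2])^[k] x = y := fun y =>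
    mem_orbitFinset (h.mem_periodicPts_twist_two x)
  obtain ⟨f, hf, hfS⟩ := h.exists_map_eq_prod (S := orbitFinset (twist τ)^[2] x) (by
    intro y hy
    obtain ⟨k, rfl⟩ := (hmem y).1 hy
    refine (hmem _).2 ⟨k + 1, ?_⟩
    rw [iterate_succ_apply']
    exact twist_twist τ _)
  have hx : IsIntegral F x := Algebra.IsIntegral.isIntegral x
  rw [← hfS]
  refine eq_of_monic_of_associated ((minpoly.monic hx).map _) (hf.map _)
    (associated_of_dvd_dvd ?_ ?_)
  · rw [map_dvd_map']
    refine minpoly.dvd F x ?_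
    rw [← eval_map_algebraMap, hfS, eval_prod]
    exact Finset.prod_eq_zero (self_mem_orbitFinset (h.mem_periodicPts_twist_two x)) (by simp)
  · rw [hfS]
    refine Finset.prod_dvd_of_coprime
      (fun x _ y _ hxy => isCoprime_X_sub_C_of_isUnit_sub (sub_ne_zero.2 hxy).isUnit) ?_
    intro y hy
    obtain ⟨k, rfl⟩ := (hmem y).1 hy
    rw [dvd_iff_isRoot, IsRoot, eval_map_algebraMap]
    exact h.aeval_twist_two_iterate (minpoly.aeval F x) k

theorem natDegree_minpoly (h : IsFrobeniusExtension σ τ q) (x : K) :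
    (minpoly F x).natDegree = minimalPeriod (twist τ)^[2] x := by
  rw [← natDegree_map (algebraMap F K), h.map_minpoly, natDegree_prod_of_monic _ _ fun y _ =>
    monic_X_sub_C y, ← card_orbitFinset]
  simp

theorem aeval_minpoly_eq_zero_iff (h : IsFrobeniusExtension σ τ q) {x y : K} :
    aeval y (minpoly F x) = 0 ↔ ∃ k, ((twist τ)^[2])^[k] x = y := by
  rw [← mem_orbitFinset (h.mem_periodicPts_twist_two x), ← eval_map_algebraMap, h.map_minpoly,
    eval_prod, Finset.prod_eq_zero_iff]
  simp [sub_eq_zero]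

theorem minpoly_eq_minpoly_iff (h : IsFrobeniusExtension σ τ q) {x y : K} :
    minpoly F x = minpoly F y ↔ ∃ k, ((twist τ)^[2])^[k] x = y := by
  rw [← h.aeval_minpoly_eq_zero_iff]
  constructor
  · intro hxy
    rw [hxy, minpoly.aeval]
  · intro hy
    exact minpoly.eq_of_irreducible_of_monic
      (minpoly.irreducible (Algebra.IsIntegral.isIntegral x)) hy
      (minpoly.monic (Algebra.IsIntegral.isIntegral x))

theorem coeff_zero_minpoly_ne_zero {x : K} (hx : x ≠ 0) : (minpoly F x).coeff 0 ≠ 0 :=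
  minpoly.coeff_zero_ne_zero (Algebra.IsIntegral.isIntegral x) hx

theorem tildePoly_minpoly (h : IsFrobeniusExtension σ τ q) {x : K} (hx : x ≠ 0) :
    tildePoly σ (minpoly F x) = minpoly F (twist τ x) := by
  set f := minpoly F x with hf
  have hf0 : f.coeff 0 ≠ 0 := coeff_zero_minpoly_ne_zero hx
  have hσ0 : (f.map σ).coeff 0 ≠ 0 := by simpa using hf0
  have hc : (σ (f.coeff 0))⁻¹ ≠ 0 := by simpa using hf0
  have hmonic : (tildePoly σ f).Monic := by
    rw [Monic, tildePoly, leadingCoeff_C_mul_of_isUnit hc.isUnit, reverse_leadingCoeff,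
      trailingCoeff_eq_coeff_zero hσ0, coeff_map, inv_mul_cancel₀ (by simpa using hf0)]
  have hdeg : (tildePoly σ f).natDegree = f.natDegree := by
    rw [tildePoly, natDegree_C_mul hc, reverse_natDegree,
      natTrailingDegree_eq_zero.2 (Or.inr hσ0), natDegree_map, Nat.sub_zero]
  refine eq_of_monic_of_dvd_of_natDegree_le (minpoly.monic (Algebra.IsIntegral.isIntegral _))
    hmonic (minpoly.dvd F _ ?_) ?_
  · have hτ : τ x ≠ 0 := by simpa using hx
    let _ := invertibleOfNonzero hτ
    have h1 := eval₂_reverse_eq_zero_iff (algebraMap F K) (τ x) (f.map σ)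
    rw [← aeval_def, ← aeval_def, h.aeval_map_sigma, hf, minpoly.aeval, map_zero,
      invOf_eq_inv] at h1
    rw [tildePoly, map_mul, twist, hf, h1.2 rfl, mul_zero]
  · rw [hdeg, hf, h.natDegree_minpoly, h.natDegree_minpoly, minimalPeriod_twist_two,
      minimalPeriod_twist_two, minimalPeriod_apply (h.mem_periodicPts_twist x)]

theorem minpoly_twist_eq_iff (h : IsFrobeniusExtension σ τ q) {x : K} :
    minpoly F (twist τ x) = minpoly F x ↔ Odd (minimalPeriod (twist τ) x) := by
  rw [eq_comm, h.minpoly_eq_minpoly_iff]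
  have hpos := h.minimalPeriod_twist_pos x
  constructor
  · rintro ⟨k, hk⟩
    rw [← iterate_mul] at hk
    by_contra hodd
    rw [Nat.not_odd_iff_even] at hodd
    have h1 : (twist τ)^[(minimalPeriod (twist τ) x - 1) + 2 * k] x = x := by
      rw [iterate_add_apply, hk, ← iterate_succ_apply, Nat.succ_eq_add_one,
        Nat.sub_add_cancel hpos, iterate_minimalPeriod]
    have h2 : minimalPeriod (twist τ) x ∣ _ := IsPeriodicPt.minimalPeriod_dvd h1
    have h3 : 2 ∣ (minimalPeriod (twist τ) x - 1) + 2 * k := hodd.two_dvd.trans h2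
    have h4 := hodd.two_dvd
    omega
  · rintro ⟨k, hk⟩
    refine ⟨k + 1, ?_⟩
    rw [← iterate_mul, show 2 * (k + 1) = 1 + minimalPeriod (twist τ) x by omega,
      iterate_add_apply, iterate_minimalPeriod, iterate_one]

theorem isSCIM_minpoly_iff (h : IsFrobeniusExtension σ τ q) {x : K} (hx : x ≠ 0) :
    IsSCIM σ (minpoly F x) ↔ Odd (minimalPeriod (twist τ) x) := by
  rw [← h.minpoly_twist_eq_iff, ← h.tildePoly_minpoly hx]
  have hi : IsIntegral F x := Algebra.IsIntegral.isIntegral x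
  exact ⟨fun hf => hf.2.2.2, fun hf => ⟨minpoly.monic hi, minpoly.irreducible hi,
    coeff_zero_minpoly_ne_zero hx, hf⟩⟩

theorem natDegree_minpoly_of_odd (h : IsFrobeniusExtension σ τ q) {x : K}
    (hx : Odd (minimalPeriod (twist τ) x)) :
    (minpoly F x).natDegree = minimalPeriod (twist τ) x := by
  have : (minimalPeriod (twist τ) x).gcd 2 = 1 := Nat.coprime_two_right.2 hx
  rw [h.natDegree_minpoly, minimalPeriod_twist_two, this, Nat.div_one]

theorem two_mul_natDegree_minpoly_of_not_odd (h : IsFrobeniusExtension σ τ q) {x : K}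
    (hx : ¬ Odd (minimalPeriod (twist τ) x)) :
    2 * (minpoly F x).natDegree = minimalPeriod (twist τ) x := by
  rw [Nat.not_odd_iff_even] at hx
  rw [h.natDegree_minpoly, minimalPeriod_twist_two, Nat.gcd_eq_right hx.two_dvd]
  exact Nat.mul_div_cancel' hx.two_dvd

theorem exists_minpoly_eq [IsAlgClosed K] {f : F[X]} (hf : f.Monic) (hirr : Irreducible f)
    (h0 : f.coeff 0 ≠ 0) : ∃ x : K, x ≠ 0 ∧ minpoly F x = f := by
  obtain ⟨x, hx⟩ := IsAlgClosed.exists_aeval_eq_zero K f hirr.degree_pos.ne'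
  have hxf := minpoly.eq_of_irreducible_of_monic hirr hx hf
  refine ⟨x, ?_, hxf.symm⟩
  rintro rfl
  apply h0
  rw [hxf]
  simp

end IsFrobeniusExtension

/-- `x` has an `M`-th root with the same period under the twisted Frobenius. -/
def HasTwistRoot (τ : K →+* K) (M : ℕ) (x : K) : Prop :=
  ∃ y, y ^ M = x ∧ (twist τ)^[minimalPeriod (twist τ) x] y = y

theorem HasTwistRoot.apply (h : IsFrobeniusExtension σ τ q) {M : ℕ} {x : K}
    (hx : HasTwistRoot τ M x) : HasTwistRoot τ M (twist τ x) := by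
  obtain ⟨y, rfl, hy⟩ := hx
  refine ⟨twist τ y, (twist_pow τ y M).symm, ?_⟩
  rw [minimalPeriod_apply (h.mem_periodicPts_twist _), ← iterate_succ_apply, iterate_succ_apply',
    hy]

theorem HasTwistRoot.exists_minimalPeriod_eq {M : ℕ} {x : K} (hx : HasTwistRoot τ M x) :
    ∃ y, y ^ M = x ∧ minimalPeriod (twist τ) y = minimalPeriod (twist τ) x := by
  obtain ⟨y, hyx, hy⟩ := hx
  refine ⟨y, hyx, Nat.dvd_antisymm (IsPeriodicPt.minimalPeriod_dvd hy)
    (IsPeriodicPt.minimalPeriod_dvd ?_)⟩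
  change (twist τ)^[_] x = x
  rw [← hyx, twist_iterate_pow, iterate_minimalPeriod]

theorem minpoly_dvd_minpoly_comp {M : ℕ} {x y : K} (hy : y ^ M = x) :
    minpoly F y ∣ (minpoly F x).comp (X ^ M) := by
  refine minpoly.dvd F y ?_
  rw [aeval_comp, map_pow, aeval_X, hy, minpoly.aeval]

variable [Algebra.IsAlgebraic F K]

/-- A root of `f(x^M)`, with `f` the minimal polynomial of `x`, is conjugate to an `M`-th root of
`x`. -/
theorem exists_pow_eq_of_aeval_comp (h : IsFrobeniusExtension σ τ q) {M : ℕ} {x y : K}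
    (hy : aeval y ((minpoly F x).comp (X ^ M)) = 0) :
    ∃ j, (((twist τ)^[2])^[j] y) ^ M = x := by
  rw [aeval_comp, map_pow, aeval_X, h.aeval_minpoly_eq_zero_iff] at hy
  obtain ⟨k, hk⟩ := hy
  obtain ⟨j, hj⟩ := exists_iterate_comm (h.mem_periodicPts_twist_two x) hk
  refine ⟨j, ?_⟩
  rw [← hj, ← iterate_mul, twist_iterate_pow]

end MinimalPolynomials

theorem Nat.card_eq_of_surjective_of_eq_iff {α β γ : Type*} {f : α → β} {g : α → γ}
    (hf : Function.Surjective f) (hg : Function.Surjective g)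
    (hfg : ∀ x y, f x = f y ↔ g x = g y) : Nat.card β = Nat.card γ := by
  have : Setoid.ker f = Setoid.ker g := Setoid.ext fun x y => hfg x y
  rw [← Nat.card_congr (Setoid.quotientKerEquivOfSurjective f hf), this,
    Nat.card_congr (Setoid.quotientKerEquivOfSurjective g hg)]

/-- The orbits of size `m` of points satisfying `P`. -/
def orbitsOfCard {α : Type*} (f : α → α) (P : α → Prop) (m : ℕ) : Set (Finset α) :=
  {o | ∃ x, P x ∧ orbitFinset f x = o ∧ o.card = m}

/-- The stable finite sets of size `n` consisting of points satisfying `P`. -/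
def stableOfCard {α : Type*} (f : α → α) (P : α → Prop) (n : ℕ) : Set (Finset α) :=
  {S | S.card = n ∧ (∀ x ∈ S, f x ∈ S) ∧ ∀ x ∈ S, P x}

section Counting

open Function

variable {F K : Type*} [Field F] [Field K] [Algebra F K]
variable {σ : F →+* F} {τ : K →+* K} {q : ℕ}

theorem surjective_orbit (P : K → Prop) (m : ℕ) :
    Surjective (fun x : {x : K // P x ∧ minimalPeriod (twist τ) x = m} =>
      (⟨orbitFinset (twist τ) x.1, x.1, x.2.1, rfl, by rw [card_orbitFinset, x.2.2]⟩ :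
        orbitsOfCard (twist τ) P m)) := by
  rintro ⟨o, x, hx, rfl, hm⟩
  rw [card_orbitFinset] at hm
  exact ⟨⟨x, hx, hm⟩, rfl⟩

theorem numSepPowerClasses_eq [PerfectField F] [IsAlgClosed K] (h : IsFrobeniusExtension σ τ q)
    {M : ℕ} (hM : M ≠ 0) (n : ℕ) :
    numSepPowerClasses σ M n =
      Nat.card (stableOfCard (twist τ) (fun x => x ≠ 0 ∧ HasTwistRoot τ M x) n) := by
  let T := {A : unitaryGrp σ n // IsSeparableMat ((A : GL (Fin n) F) : Matrix (Fin n) (Fin n) F) ∧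
    ∃ B : unitaryGrp σ n, B ^ M = A}
  have hE : ∀ A : T, ∃ S : Finset K,
      IsEigenset ((A.1 : GL (Fin n) F) : Matrix (Fin n) (Fin n) F) S :=
    fun A => exists_isEigenset A.2.1
  choose E hE using hE
  have hE0 : ∀ A, (0 : K) ∉ E A := fun A => (hE A).zero_notMem (Units.isUnit _)
  have hES : ∀ A, ∀ x ∈ E A, twist τ x ∈ E A := fun A => (hE A).twist_mem h (Units.isUnit _)
    (IsUnit.of_mul_eq_one _ antidiagMat_mul_self) (mem_unitaryGrp.1 A.1.2)
  refine Nat.card_eq_of_surjective_of_eq_iff (α := T)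
    (f := fun A => ⟨ConjClasses.mk A.1, ?_⟩) (g := fun A => ⟨E A, (hE A).card, hES A, ?_⟩)
    ?_ ?_ ?_
  · intro B hB
    rw [ConjClasses.mem_carrier_iff_mk_eq, ConjClasses.mk_eq_mk_iff_isConj, isConj_comm,
      isConj_iff] at hB
    obtain ⟨C, rfl⟩ := hB
    obtain ⟨hsep, D, hD⟩ := A.2
    refine ⟨?_, C * D * C⁻¹, by rw [conj_pow, hD]⟩
    have : (((C * A.1 * C⁻¹ : unitaryGrp σ n) : GL (Fin n) F) : Matrix (Fin n) (Fin n) F).charpoly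
        = ((A.1 : GL (Fin n) F) : Matrix (Fin n) (Fin n) F).charpoly := by
      simp
    rw [IsSeparableMat, this]
    exact hsep
  · have := (h.exists_equivariant_root_iff (hES A) M).1
      ((exists_unitary_root_iff h (hE A) (hE0 A) (hES A) hM).1 A.2.2)
    exact fun x hx => ⟨fun hx0 => hE0 A (hx0 ▸ hx), this x hx⟩
  · rintro ⟨c, hc⟩
    obtain ⟨A, rfl⟩ := ConjClasses.exists_rep c
    exact ⟨⟨A, hc A ConjClasses.mem_carrier_mk⟩, rfl⟩
  · rintro ⟨S, hn, hS, hP⟩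
    have h0 : (0 : K) ∉ S := fun h0 => (hP 0 h0).1 rfl
    obtain ⟨A, hA⟩ := exists_unitary_isEigenset h hn h0 hS
    refine ⟨⟨A, hA.isSeparableMat, (exists_unitary_root_iff h hA h0 hS hM).2
      ((h.exists_equivariant_root_iff hS M).2 fun x hx => (hP x hx).2)⟩, Subtype.ext ?_⟩
    exact (hE _).unique hA
  · intro A B
    rw [Subtype.ext_iff, Subtype.ext_iff]
    change ConjClasses.mk A.1 = ConjClasses.mk B.1 ↔ E A = E B
    rw [ConjClasses.mk_eq_mk_iff_isConj]
    constructor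
    · intro hAB
      obtain ⟨C, hC⟩ := isConj_iff.1 hAB
      refine ((hE A).unique ((isEigenset_iff_charpoly_eq (hE B)).2 ?_))
      rw [← hC]
      simp
    · intro hAB
      exact isConj_of_isEigenset h (hE A) (hAB ▸ hE B) (hE0 A) (hES A)

variable [Algebra.IsAlgebraic F K]

theorem NtildeM_eq [IsAlgClosed K] (h : IsFrobeniusExtension σ τ q) {M : ℕ} (hM : M ≠ 0) {d : ℕ}
    (hd : Odd d) :
    NtildeM σ M d =
      Nat.card (orbitsOfCard (twist τ) (fun x => x ≠ 0 ∧ HasTwistRoot τ M x) d) := by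
  let T := {x : K // (x ≠ 0 ∧ HasTwistRoot τ M x) ∧ minimalPeriod (twist τ) x = d}
  refine Nat.card_eq_of_surjective_of_eq_iff (α := T) (f := fun x => ⟨minpoly F x.1, ?_⟩) ?_
    (surjective_orbit _ d) ?_
  · obtain ⟨x, ⟨hx0, hx⟩, rfl⟩ := x
    obtain ⟨y, hyx, hy⟩ := hx.exists_minimalPeriod_eq
    have hy0 : y ≠ 0 := by rintro rfl; exact hx0 (by rw [← hyx, zero_pow hM])
    have hyd := hd
    rw [← hy] at hyd
    refine ⟨⟨(h.isSCIM_minpoly_iff hx0).2 hd, minpoly F y, (h.isSCIM_minpoly_iff hy0).2 hyd, ?_,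
      minpoly_dvd_minpoly_comp hyx⟩, h.natDegree_minpoly_of_odd hd⟩
    rw [h.natDegree_minpoly_of_odd hd, h.natDegree_minpoly_of_odd hyd, hy]
  · rintro ⟨f, ⟨hf, g, hg, hgf, hdvd⟩, hfd⟩
    obtain ⟨x, hx0, rfl⟩ := IsFrobeniusExtension.exists_minpoly_eq (K := K) hf.1 hf.2.1 hf.2.2.1
    obtain ⟨y, hy0, rfl⟩ := IsFrobeniusExtension.exists_minpoly_eq (K := K) hg.1 hg.2.1 hg.2.2.1
    rw [h.isSCIM_minpoly_iff hx0] at hf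
    rw [h.isSCIM_minpoly_iff hy0] at hg
    rw [h.natDegree_minpoly_of_odd hf] at hfd hgf
    rw [h.natDegree_minpoly_of_odd hg] at hgf
    obtain ⟨j, hj⟩ := exists_pow_eq_of_aeval_comp h (M := M) (x := x) (y := y) (by
      obtain ⟨r, hr⟩ := hdvd
      rw [hr, map_mul, minpoly.aeval, zero_mul])
    refine ⟨⟨x, ⟨hx0, _, hj, ?_⟩, hfd⟩, rfl⟩
    rw [← hgf, ← iterate_mul]
    exact (isPeriodicPt_minimalPeriod (twist τ) y).apply_iterate _
  · rintro ⟨x, hx, hxd⟩ ⟨y, hy, hyd⟩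
    rw [Subtype.ext_iff, Subtype.ext_iff]
    change minpoly F x = minpoly F y ↔ orbitFinset (twist τ) x = orbitFinset (twist τ) y
    rw [h.minpoly_eq_minpoly_iff, orbitFinset_eq_iff h.mem_periodicPts_twist]
    constructor
    · rintro ⟨k, hk⟩
      exact ⟨2 * k, by rw [iterate_mul, hk]⟩
    · rintro ⟨k, hk⟩
      rcases Nat.even_or_odd' k with ⟨j, rfl | rfl⟩
      · exact ⟨j, by rw [← iterate_mul, hk]⟩
      · obtain ⟨i, hi⟩ := hd
        refine ⟨j + 1 + i, ?_⟩
        rw [← iterate_mul, show 2 * (j + 1 + i) = (2 * j + 1) + minimalPeriod (twist τ) x by omega,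
          iterate_add_apply, iterate_minimalPeriod, hk]

theorem RtildeM_eq [IsAlgClosed K] (h : IsFrobeniusExtension σ τ q) {M : ℕ} (d : ℕ) :
    RtildeM σ M d =
      Nat.card (orbitsOfCard (twist τ) (fun x => x ≠ 0 ∧ HasTwistRoot τ M x) (2 * d)) := by
  let T := {x : K // (x ≠ 0 ∧ HasTwistRoot τ M x) ∧ minimalPeriod (twist τ) x = 2 * d}
  have hdeg : ∀ x, minimalPeriod (twist τ) x = 2 * d → (minpoly F x).natDegree = d := by
    intro x hx
    have := h.two_mul_natDegree_minpoly_of_not_odd (x := x) (by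
      rw [hx, Nat.not_odd_iff_even]; exact even_two_mul d)
    omega
  refine Nat.card_eq_of_surjective_of_eq_iff (α := T)
    (f := fun x => ⟨s(minpoly F x.1, minpoly F (twist τ x.1)), ?_⟩) ?_ (surjective_orbit _ _) ?_
  · obtain ⟨x, ⟨hx0, hx⟩, hxd⟩ := x
    obtain ⟨y, hyx, hy⟩ := hx.exists_minimalPeriod_eq
    have hi : ∀ z : K, IsIntegral F z := Algebra.IsIntegral.isIntegral
    refine ⟨minpoly F x, ⟨minpoly.monic (hi x), minpoly.irreducible (hi x), minpoly F y,
      minpoly.irreducible (hi y), ?_, minpoly_dvd_minpoly_comp hyx⟩,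
      IsFrobeniusExtension.coeff_zero_minpoly_ne_zero hx0, hdeg x hxd, ?_, ?_⟩
    · rw [hdeg x hxd, hdeg y (hy.trans hxd)]
    · rw [h.tildePoly_minpoly hx0, ne_comm, Ne, h.minpoly_twist_eq_iff, hxd,
        Nat.not_odd_iff_even]
      exact even_two_mul d
    · rw [h.tildePoly_minpoly hx0]
  · rintro ⟨_, g, ⟨hmon, hirr, f, hf, hfg, hdvd⟩, hg0, hgd, hne, rfl⟩
    obtain ⟨x, hx0, rfl⟩ := IsFrobeniusExtension.exists_minpoly_eq (K := K) hmon hirr hg0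
    rw [h.tildePoly_minpoly hx0, ne_comm, Ne, h.minpoly_twist_eq_iff] at hne
    have hxd := h.two_mul_natDegree_minpoly_of_not_odd hne
    rw [hgd] at hxd hfg
    obtain ⟨y, hy⟩ := IsAlgClosed.exists_aeval_eq_zero K f hf.degree_pos.ne'
    have hyd : (minpoly F y).natDegree = d := by
      rw [← minpoly.eq_of_irreducible hf hy, natDegree_mul_C (by simpa using hf.ne_zero), hfg]
    obtain ⟨j, hj⟩ := exists_pow_eq_of_aeval_comp h (M := M) (x := x) (y := y) (by
      obtain ⟨r, hr⟩ := hdvd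
      rw [hr, map_mul, hy, zero_mul])
    refine ⟨⟨x, ⟨hx0, _, hj, ?_⟩, hxd.symm⟩, Subtype.ext ?_⟩
    · rw [← hxd, ← iterate_mul]
      refine IsPeriodicPt.apply_iterate (f := twist τ) (n := 2 * d) ?_ _
      rw [isPeriodicPt_iff_minimalPeriod_dvd]
      by_cases hodd : Odd (minimalPeriod (twist τ) y)
      · rw [h.natDegree_minpoly_of_odd hodd] at hyd
        exact hyd ▸ dvd_mul_left _ _
      · rw [← hyd, h.two_mul_natDegree_minpoly_of_not_odd hodd]
    · simp only [h.tildePoly_minpoly hx0]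
  · rintro ⟨x, hx, hxd⟩ ⟨y, hy, hyd⟩
    rw [Subtype.ext_iff, Subtype.ext_iff]
    change s(minpoly F x, minpoly F (twist τ x)) = s(minpoly F y, minpoly F (twist τ y)) ↔
      orbitFinset (twist τ) x = orbitFinset (twist τ) y
    rw [orbitFinset_eq_iff h.mem_periodicPts_twist]
    simp only [Sym2.eq_iff, h.minpoly_eq_minpoly_iff]
    simp only [← iterate_mul]
    constructor
    · rintro (⟨⟨k, hk⟩, -⟩ | ⟨-, k, hk⟩)
      · exact ⟨_, hk⟩
      · exact ⟨2 * k + 1, hk⟩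
    · rintro ⟨k, rfl⟩
      rcases Nat.even_or_odd' k with ⟨j, rfl | rfl⟩
      · refine Or.inl ⟨⟨j, rfl⟩, j, ?_⟩
        rw [← iterate_succ_apply, iterate_succ_apply']
      · refine Or.inr ⟨⟨j + 1, ?_⟩, j, rfl⟩
        rw [← iterate_succ_apply' (twist τ)]
        rfl

end Counting

section FiniteFields

open Function

variable {F K : Type*} [Field F] [Field K] [Algebra F K]
variable {σ : F →+* F} {τ : K →+* K} {q : ℕ}

theorem iterate_eq_pow_pow (hτ : ∀ x, τ x = x ^ q) (k : ℕ) (x : K) : τ^[k] x = x ^ q ^ k := by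
  induction k with
  | zero => simp
  | succ k ih => rw [iterate_succ_apply', ih, hτ, ← pow_mul, pow_succ]

theorem isFrobeniusExtension_of_card [Fintype F] [Algebra.IsAlgebraic F K] (hq : 2 ≤ q)
    (hF : Fintype.card F = q ^ 2) (hσ : ∀ a, σ a = a ^ q) (hτ : ∀ x, τ x = x ^ q) :
    IsFrobeniusExtension σ τ q where
  two_le := hq
  tau_apply := hτ
  sigma_apply := hσ
  sigma_sigma a := by rw [hσ, hσ, ← pow_mul, ← sq, ← hF, FiniteField.pow_card]
  exists_sigma_ne := by
    by_contra! hall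
    have h1 : (Finset.univ : Finset F).card ≤ (X ^ q - X : F[X]).natDegree := by
      refine card_le_degree_of_subset_roots fun a _ => ?_
      rw [mem_roots (FiniteField.X_pow_card_sub_X_ne_zero F hq)]
      simp [← hσ, hall]
    rw [FiniteField.X_pow_card_sub_X_natDegree_eq F hq, Finset.card_univ, hF] at h1
    nlinarith
  descent x hx := by
    classical
    by_contra! hall
    have hq2 : 1 < q ^ 2 := by nlinarith
    have hx' : x ^ q ^ 2 = x := by rw [hτ, hτ, ← pow_mul, ← sq] at hx; exact hx
    have h1 : (insert x ((Finset.univ : Finset F).image (algebraMap F K))).card ≤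
        (X ^ q ^ 2 - X : K[X]).natDegree := by
      refine card_le_degree_of_subset_roots fun a ha => ?_
      rw [mem_roots (FiniteField.X_pow_card_sub_X_ne_zero K hq2)]
      simp only [Finset.insert_val, Multiset.mem_ndinsert, Finset.mem_val, Finset.mem_image,
        Finset.mem_univ, true_and] at ha
      rcases ha with rfl | ⟨a, rfl⟩
      · simp [hx']
      · simp [← map_pow, ← hF, FiniteField.pow_card]
    rw [FiniteField.X_pow_card_sub_X_natDegree_eq K hq2, Finset.card_insert_of_notMem,
      Finset.card_image_of_injective _ (algebraMap F K).injective, Finset.card_univ, hF] at h1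
    · omega
    · simpa using hall
  periodic x := by
    have hi : IsIntegral F x := Algebra.IsIntegral.isIntegral x
    have : FiniteDimensional F (IntermediateField.adjoin F {x}) :=
      IntermediateField.adjoin.finiteDimensional hi
    have : Finite (IntermediateField.adjoin F {x}) := Module.finite_of_finite F
    have := Fintype.ofFinite (IntermediateField.adjoin F {x})
    have hcard := Module.card_eq_pow_finrank (K := F) (V := IntermediateField.adjoin F {x})
    set d := Module.finrank F (IntermediateField.adjoin F {x})
    have hd : 0 < d := Module.finrank_pos
    refine ⟨2 * d, by omega, ?_⟩
    rw [iterate_eq_pow_pow hτ, pow_mul, ← hF, ← hcard]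
    exact congrArg Subtype.val
      (FiniteField.pow_card (IntermediateField.AdjoinSimple.gen F x))

theorem IsFrobeniusExtension.finite_minimalPeriod_eq (h : IsFrobeniusExtension σ τ q) {m : ℕ}
    (hm : 0 < m) : {x | minimalPeriod (twist τ) x = m}.Finite := by
  have hN : 1 < q ^ (2 * m) := Nat.one_lt_pow (by omega) h.two_le
  refine (finite_setOfPred_isRoot
    (FiniteField.X_pow_card_sub_X_ne_zero K hN)).subset fun x hx => ?_
  have h1 : (twist τ)^[2 * m] x = x := by
    have hx : minimalPeriod (twist τ) x = m := hx
    rw [← hx]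
    exact (isPeriodicPt_minimalPeriod (twist τ) x).const_mul 2
  rw [twist_iterate_two_mul, iterate_eq_pow_pow h.tau_apply] at h1
  simp [h1]

end FiniteFields

section GeneratingFunction

open Function

theorem orbitFinset_subset {α : Type*} {f : α → α} (hf : ∀ x, x ∈ periodicPts f) {S : Finset α}
    (hS : ∀ x ∈ S, f x ∈ S) {x : α} (hx : x ∈ S) : orbitFinset f x ⊆ S := by
  intro y hy
  obtain ⟨k, rfl⟩ := (mem_orbitFinset (hf x)).1 hy
  clear hy
  induction k with
  | zero => exact hx
  | succ k ih => rw [iterate_succ_apply']; exact hS _ ih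

/-- Stable finite sets correspond to finite sets of orbits. -/
theorem card_stableOfCard {α : Type*} {f : α → α} (hf : ∀ x, x ∈ periodicPts f) {P : α → Prop}
    (hP : ∀ x, P x → P (f x)) {n : ℕ} (𝒪 : Finset (Finset α))
    (h𝒪 : ∀ o ∈ 𝒪, ∃ x, P x ∧ orbitFinset f x = o)
    (h𝒪n : ∀ x, P x → minimalPeriod f x ≤ n → orbitFinset f x ∈ 𝒪) :
    Nat.card (stableOfCard f P n) = (𝒪.powerset.filter fun t => ∑ o ∈ t, o.card = n).card := by
  classical
  have hPit : ∀ x, P x → ∀ k, P (f^[k] x) := by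
    intro x hx k
    induction k with
    | zero => exact hx
    | succ k ih => rw [iterate_succ_apply']; exact hP _ ih
  have hmem : ∀ o ∈ 𝒪, ∀ y ∈ o, P y ∧ orbitFinset f y = o := by
    intro o ho y hy
    obtain ⟨x, hx, rfl⟩ := h𝒪 o ho
    obtain ⟨k, rfl⟩ := (mem_orbitFinset (hf x)).1 hy
    exact ⟨hPit x hx k, orbitFinset_iterate hf x k⟩
  have hdisj : ∀ t ⊆ 𝒪, (t.biUnion id).card = ∑ o ∈ t, o.card := by
    intro t ht
    refine Finset.card_biUnion fun o ho o' ho' hne => ?_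
    refine Finset.disjoint_left.2 fun y hy hy' => ?_
    exact hne ((hmem o (ht ho) y hy).2.symm.trans (hmem o' (ht ho') y hy').2)
  have hunion : ∀ S ∈ stableOfCard f P n, (S.image (orbitFinset f)).biUnion id = S := by
    intro S hS
    ext y
    simp only [Finset.mem_biUnion, Finset.mem_image, id]
    constructor
    · rintro ⟨_, ⟨x, hx, rfl⟩, hy⟩
      exact orbitFinset_subset hf hS.2.1 hx hy
    · exact fun hy => ⟨_, ⟨y, hy, rfl⟩, self_mem_orbitFinset (hf y)⟩
  have himage : ∀ S ∈ stableOfCard f P n, S.image (orbitFinset f) ⊆ 𝒪 := by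
    intro S hS o ho
    obtain ⟨x, hx, rfl⟩ := Finset.mem_image.1 ho
    refine h𝒪n x (hS.2.2 x hx) ?_
    rw [← card_orbitFinset, ← hS.1]
    exact Finset.card_le_card (orbitFinset_subset hf hS.2.1 hx)
  rw [Nat.card_coe_set_eq, ← Set.ncard_coe_finset]
  refine Set.ncard_congr (fun S _ => S.image (orbitFinset f)) ?_ ?_ ?_
  · intro S hS
    rw [Finset.mem_coe, Finset.mem_filter, Finset.mem_powerset]
    exact ⟨himage S hS, by rw [← hdisj _ (himage S hS), hunion S hS, hS.1]⟩
  · intro S T hS hT hST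
    rw [← hunion S hS, ← hunion T hT, hST]
  · intro t ht
    rw [Finset.mem_coe, Finset.mem_filter, Finset.mem_powerset] at ht
    refine ⟨t.biUnion id, ⟨(hdisj t ht.1).trans ht.2, ?_, ?_⟩, ?_⟩
    · intro x hx
      obtain ⟨o, ho, hxo⟩ := Finset.mem_biUnion.1 hx
      refine Finset.mem_biUnion.2 ⟨o, ho, ?_⟩
      change f x ∈ o
      rw [← (hmem o (ht.1 ho) x hxo).2]
      exact (mem_orbitFinset (hf x)).2 ⟨1, rfl⟩
    · intro x hx
      obtain ⟨o, ho, hxo⟩ := Finset.mem_biUnion.1 hx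
      exact (hmem o (ht.1 ho) x hxo).1
    · ext o
      simp only [Finset.mem_image, Finset.mem_biUnion, id]
      constructor
      · rintro ⟨x, ⟨o', ho', hx⟩, rfl⟩
        rwa [(hmem o' (ht.1 ho') x hx).2]
      · intro ho
        obtain ⟨x, -, rfl⟩ := h𝒪 o (ht.1 ho)
        exact ⟨x, ⟨_, ho, self_mem_orbitFinset (hf x)⟩, rfl⟩

theorem coeff_prod_one_add_X_pow {ι : Type*} (s : Finset ι) (e : ι → ℕ) (n : ℕ) :
    PowerSeries.coeff n (∏ i ∈ s, ((1 : PowerSeries ℚ) + PowerSeries.X ^ e i)) =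
      ((s.powerset.filter fun t => ∑ i ∈ t, e i = n).card : ℚ) := by
  classical
  rw [Finset.prod_one_add, map_sum, Finset.card_filter, Nat.cast_sum]
  refine Finset.sum_congr rfl fun t _ => ?_
  rw [Finset.prod_pow_eq_pow_sum, PowerSeries.coeff_X_pow]
  simp [eq_comm]

theorem coeff_prod_orbits {α : Type*} {f : α → α} (hf : ∀ x, x ∈ periodicPts f) {P : α → Prop}
    (hP : ∀ x, P x → P (f x)) (hfin : ∀ m, 0 < m → {x | minimalPeriod f x = m}.Finite)
    {n B : ℕ} (hn : n ≤ B) :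
    PowerSeries.coeff n (∏ m ∈ Finset.Icc 1 B, ((1 : PowerSeries ℚ) + PowerSeries.X ^ m) ^
      Nat.card (orbitsOfCard f P m)) = (Nat.card (stableOfCard f P n) : ℚ) := by
  classical
  have hO : ∀ m, 0 < m → (orbitsOfCard f P m).Finite := by
    intro m hm
    refine ((hfin m hm).image (orbitFinset f)).subset ?_
    rintro _ ⟨x, -, rfl, hx⟩
    rw [card_orbitFinset] at hx
    exact ⟨x, hx, rfl⟩
  let O : ℕ → Finset (Finset α) := fun m => if hm : 0 < m then (hO m hm).toFinset else ∅
  have hmemO : ∀ m, 0 < m → ∀ o, o ∈ O m ↔ o ∈ orbitsOfCard f P m := by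
    intro m hm o
    simp [O, hm]
  have hprod : ∏ m ∈ Finset.Icc 1 B, ((1 : PowerSeries ℚ) + PowerSeries.X ^ m) ^
      Nat.card (orbitsOfCard f P m) =
      ∏ o ∈ (Finset.Icc 1 B).biUnion O, ((1 : PowerSeries ℚ) + PowerSeries.X ^ o.card) := by
    rw [Finset.prod_biUnion]
    · refine Finset.prod_congr rfl fun m hm => ?_
      have hm0 : 0 < m := (Finset.mem_Icc.1 hm).1
      rw [Finset.prod_congr rfl (g := fun _ => (1 : PowerSeries ℚ) + PowerSeries.X ^ m),
        Finset.prod_const]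
      · congr 1
        rw [Nat.card_eq_card_finite_toFinset (hO m hm0)]
        simp [O, hm0]
      · intro o ho
        obtain ⟨x, -, -, hm⟩ := (hmemO m hm0 o).1 ho
        rw [hm]
    · intro m hm m' hm' hne
      rw [Function.onFun, Finset.disjoint_left]
      intro o ho ho'
      obtain ⟨x, -, -, h1⟩ := (hmemO m (Finset.mem_Icc.1 hm).1 o).1 ho
      obtain ⟨y, -, -, h2⟩ := (hmemO m' (Finset.mem_Icc.1 hm').1 o).1 ho'
      exact hne (h1.symm.trans h2)
  rw [hprod, coeff_prod_one_add_X_pow, card_stableOfCard hf hP ((Finset.Icc 1 B).biUnion O)]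
  · intro o ho
    obtain ⟨m, hm, ho⟩ := Finset.mem_biUnion.1 ho
    obtain ⟨x, hx, hxo, -⟩ := (hmemO m (Finset.mem_Icc.1 hm).1 o).1 ho
    exact ⟨x, hx, hxo⟩
  · intro x hx hxn
    have hpos := minimalPeriod_pos_of_mem_periodicPts (hf x)
    exact Finset.mem_biUnion.2 ⟨minimalPeriod f x, Finset.mem_Icc.2 ⟨hpos, hxn.trans hn⟩,
      (hmemO _ hpos _).2 ⟨x, hx, rfl, card_orbitFinset f x⟩⟩

theorem multipliable_one_add_X_pow_pow {e : ℕ → ℕ} (he : ∀ k, k < e k) (a : ℕ → ℕ) :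
    Multipliable (fun k => ((1 : PowerSeries ℚ) + PowerSeries.X ^ e k) ^ a k) := by
  let _ : TopologicalSpace ℚ := ⊥
  have h := PowerSeries.WithPiTopology.multipliable_one_add_of_tendsto_order_atTop_nhds_top (R := ℚ)
    (f := fun k => ((1 : PowerSeries ℚ) + PowerSeries.X ^ e k) ^ a k - 1) (by
      refine ENat.tendsto_nhds_top_iff_natCast_lt.2 fun n => Filter.eventually_atTop.2 ⟨n, ?_⟩
      intro m hm
      have hdvd : PowerSeries.X ^ e m ∣ ((1 : PowerSeries ℚ) + PowerSeries.X ^ e m) ^ a m - 1 := by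
        have := sub_dvd_pow_sub_pow ((1 : PowerSeries ℚ) + PowerSeries.X ^ e m) 1 (a m)
        simpa using this
      have h1 : ((e m : ℕ) : ℕ∞) ≤ (((1 : PowerSeries ℚ) + PowerSeries.X ^ e m) ^ a m - 1).order :=
        PowerSeries.nat_le_order _ _ (PowerSeries.X_pow_dvd_iff.1 hdvd)
      refine lt_of_lt_of_le ?_ h1
      exact_mod_cast hm.trans_lt (he m))
  simpa using h

theorem prod_range_odd_mul_even {R : Type*} [CommMonoid R] (g : ℕ → R) (B : ℕ) :
    ∏ k ∈ Finset.range B, (g (2 * k + 1) * g (2 * (k + 1))) = ∏ m ∈ Finset.Icc 1 (2 * B), g m := by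
  induction B with
  | zero => simp
  | succ B ih =>
    rw [Finset.prod_range_succ, ih, show 2 * (B + 1) = 2 * B + 1 + 1 by ring,
      Finset.prod_Icc_succ_top (by omega), Finset.prod_Icc_succ_top (by omega), mul_assoc]

/-- An infinite product whose partial products have eventually constant coefficients. -/
theorem tprod_mul_tprod_eq {f g : ℕ → PowerSeries ℚ} (hf : Multipliable f) (hg : Multipliable g)
    {c : PowerSeries ℚ} (hc : ∀ n, ∃ N, ∀ B ≥ N,
      PowerSeries.coeff n (∏ k ∈ Finset.range B, (f k * g k)) = PowerSeries.coeff n c) :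
    (∏' k, f k) * ∏' k, g k = c := by
  let _ : TopologicalSpace ℚ := ⊥
  have : DiscreteTopology ℚ := ⟨rfl⟩
  have : IsTopologicalSemiring (PowerSeries ℚ) :=
    PowerSeries.WithPiTopology.instIsTopologicalSemiring ℚ
  have : T2Space (PowerSeries ℚ) := PowerSeries.WithPiTopology.instT2Space ℚ
  rw [← hf.tprod_mul hg]
  have hlim := (hf.mul hg).hasProd.tendsto_prod_nat
  refine tendsto_nhds_unique hlim ?_
  refine (PowerSeries.WithPiTopology.tendsto_iff_coeff_tendsto ℚ _ _ _).2 fun n => ?_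
  obtain ⟨N, hN⟩ := hc n
  exact tendsto_const_nhds.congr' (Filter.eventually_atTop.2 ⟨N, fun B hB => (hN B hB).symm⟩)

end GeneratingFunction

/-- Generating function for the conjugacy classes of separable `M`-th powers in `U(n,q²)`.
Odd `d` are enumerated as `2k+1` and `d ≥ 1` as `k+1`; both infinite products converge. -/
theorem statement6 (p ℓ q : ℕ) (hp : p.Prime) (hℓ : 0 < ℓ) (hq : q = p ^ ℓ)
    (F : Type*) [Field F] [Fintype F] (hF : Fintype.card F = q ^ 2)
    (σ : F →+* F) (hσ : ∀ x : F, σ x = x ^ q)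
    (M : ℕ) (hM : 2 ≤ M) :
    Multipliable (fun k : ℕ => ((1 : PowerSeries ℚ) + PowerSeries.X ^ (2 * k + 1)) ^
        NtildeM σ M (2 * k + 1)) ∧
    Multipliable (fun k : ℕ => ((1 : PowerSeries ℚ) + PowerSeries.X ^ (2 * (k + 1))) ^
        RtildeM σ M (k + 1)) ∧
    (PowerSeries.mk fun n => if n = 0 then (1 : ℚ) else (numSepPowerClasses σ M n : ℚ)) =
      (∏' k : ℕ, ((1 : PowerSeries ℚ) + PowerSeries.X ^ (2 * k + 1)) ^
          NtildeM σ M (2 * k + 1)) *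
      ∏' k : ℕ, ((1 : PowerSeries ℚ) + PowerSeries.X ^ (2 * (k + 1))) ^
          RtildeM σ M (k + 1) := by
  have hodd := multipliable_one_add_X_pow_pow (e := fun k => 2 * k + 1) (fun k => by omega)
    fun k => NtildeM σ M (2 * k + 1)
  have heven := multipliable_one_add_X_pow_pow (e := fun k => 2 * (k + 1)) (fun k => by omega)
    fun k => RtildeM σ M (k + 1)
  refine ⟨hodd, heven, (tprod_mul_tprod_eq hodd heven fun n => ⟨n, fun B hB => ?_⟩).symm⟩
  have : Fact p.Prime := ⟨hp⟩
  have : CharP F p := charP_of_card_eq_prime_pow (f := ℓ * 2) (by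
    rw [hF, hq, pow_mul])
  have : CharP (AlgebraicClosure F) p :=
    charP_of_injective_algebraMap (algebraMap F (AlgebraicClosure F)).injective p
  let τ : AlgebraicClosure F →+* AlgebraicClosure F := iterateFrobenius _ p ℓ
  have hq2 : 2 ≤ q := by
    rw [hq]
    exact hp.two_le.trans (Nat.le_self_pow hℓ.ne' p)
  have h : IsFrobeniusExtension σ τ q :=
    isFrobeniusExtension_of_card hq2 hF hσ fun x => by rw [hq]; rfl
  have hM0 : M ≠ 0 := by omega
  set P : AlgebraicClosure F → Prop := fun x => x ≠ 0 ∧ HasTwistRoot τ M x with hPdef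
  have hP : ∀ x, P x → P (twist τ x) := fun x hx => ⟨twist_ne_zero τ hx.1, hx.2.apply h⟩
  have hprod := prod_range_odd_mul_even (fun m => ((1 : PowerSeries ℚ) + PowerSeries.X ^ m) ^
    Nat.card (orbitsOfCard (twist τ) P m)) B
  simp only [NtildeM_eq h hM0 (odd_two_mul_add_one _), RtildeM_eq h]
  rw [hprod, PowerSeries.coeff_mk]
  split_ifs with hn
  · subst hn
    rw [PowerSeries.coeff_zero_eq_constantCoeff_apply, map_prod]
    refine Finset.prod_eq_one fun m hm => ?_
    have : m ≠ 0 := by have := (Finset.mem_Icc.1 hm).1; omega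
    simp [this]
  · rw [coeff_prod_orbits h.mem_periodicPts_twist hP (fun m hm => h.finite_minimalPeriod_eq hm)
      (by omega), numSepPowerClasses_eq h hM0]
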